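/- Let a ∈ Z_{≥2}, d ≥ 5 and n ≥ 4. If a is sufficiently large in terms of d and n, then there exist f ∈ Z_{≥0} and g > 0, depending only on a, d and n, such that for every n-element configuration U ⊂ Z^d, P_U(U_f ∈ 𝒰_{d,n}(a,1)) ≥ g. -/

import Mathlib

open MeasureTheory

namespace HATFormal

/-- Points of the lattice `ℤ^d`. -/
abbrev Pt (d : ℕ) := Fin d → ℤ

/-- The `2d` unit steps of the simple random walk on `ℤ^d`. -/
def Dir (d : ℕ) : Set (Pt d) :=
  {s | ∃ i : Fin d, s = Pi.single i 1 ∨ s = Pi.single i (-1)}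

/-- The position, after `t` steps, of the walk started at `x` with steps `s`. -/
def wpos (d : ℕ) (x : Pt d) {T : ℕ} (s : Fin T → Pt d) (t : ℕ) : Pt d :=
  x + ∑ i ∈ Finset.univ.filter (fun i : Fin T => (i : ℕ) < t), s i

/-- The probability of an event `P` of the first `T` steps of simple random walk on `ℤ^d`. -/
noncomputable def prob (d T : ℕ) (P : (Fin T → Pt d) → Prop) : ℝ :=
  (Nat.card {s : Fin T → Pt d // (∀ i, s i ∈ Dir d) ∧ P s} : ℝ) / ((2 * d : ℕ) : ℝ) ^ T

open Classical in
/-- `esc d A x = P_x(τ_A = ∞)` if `x ∈ A`, and `0` otherwise. -/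
noncomputable def esc (d : ℕ) (A : Set (Pt d)) (x : Pt d) : ℝ :=
  if x ∈ A then ⨅ T : ℕ, prob d T (fun s => ∀ t, 1 ≤ t → t ≤ T → wpos d x s t ∉ A) else 0

/-- The capacity of `A`. -/
noncomputable def capa (d : ℕ) (A : Set (Pt d)) : ℝ := ∑' x : A, esc d A (x : Pt d)

/-- The harmonic measure `H_A(x) = esc_A(x) / cap_A`. -/
noncomputable def harm (d : ℕ) (A : Set (Pt d)) (x : Pt d) : ℝ := esc d A x / capa d A

/-- `P_x(τ_W < ∞)`. -/
noncomputable def retProb (d : ℕ) (W : Set (Pt d)) (x : Pt d) : ℝ :=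
  ∑' t : ℕ, prob d t (fun s => 1 ≤ t ∧ wpos d x s t ∈ W ∧
    ∀ u, 1 ≤ u → u < t → wpos d x s u ∉ W)

/-- `P_x(τ_W < ∞ and S_{τ_W − 1} = y)`. -/
noncomputable def hitFrom (d : ℕ) (W : Set (Pt d)) (x y : Pt d) : ℝ :=
  ∑' t : ℕ, prob d t (fun s => 1 ≤ t ∧ wpos d x s t ∈ W ∧ wpos d x s (t - 1) = y ∧
    ∀ u, 1 ≤ u → u < t → wpos d x s u ∉ W)

/-- `P_x(τ_W < ∞ and S_{τ_W} ∈ T)`. -/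
noncomputable def firstHitIn (d : ℕ) (W T : Set (Pt d)) (x : Pt d) : ℝ :=
  ∑' t : ℕ, prob d t (fun s => 1 ≤ t ∧ wpos d x s t ∈ W ∧ wpos d x s t ∈ T ∧
    ∀ u, 1 ≤ u → u < t → wpos d x s u ∉ W)

/-- `P_x(S_{τ_W − 1} = y ∣ τ_W < ∞)`. -/
noncomputable def transP (d : ℕ) (W : Set (Pt d)) (x y : Pt d) : ℝ :=
  hitFrom d W x y / retProb d W x

/-- The Green's function of simple random walk on `ℤ^d`. -/
noncomputable def green (d : ℕ) (x : Pt d) : ℝ :=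
  ∑' t : ℕ, prob d t (fun s => wpos d x s t = 0)

/-- Configurations: finite subsets of `ℤ^d`. -/
abbrev Conf (d : ℕ) := Finset (Pt d)

/-- `p_U(x, y)`, the probability that HAT activates at `x` and transports to `y`. -/
noncomputable def pHAT (d : ℕ) (U : Conf d) (x y : Pt d) : ℝ :=
  harm d (↑U) x * transP d ((↑U : Set (Pt d)) \ {x}) x y

open Classical in
/-- The transition probabilities of HAT. -/
noncomputable def hatProb (d : ℕ) (U V : Conf d) : ℝ :=
  if V = U then ∑' z : Pt d, pHAT d U z z
  else ∑' x : Pt d, ∑' y : Pt d,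
    if x ∈ U ∧ x ≠ y ∧ V = insert y (U.erase x) then pHAT d U x y else 0

instance (d : ℕ) : MeasurableSpace (Conf d) := ⊤

/-- `μ` is the law of HAT started from `U`. -/
def IsHATLaw (d : ℕ) (U : Conf d) (μ : Measure (ℕ → Conf d)) : Prop :=
  IsProbabilityMeasure μ ∧
  ∀ (t : ℕ) (u : ℕ → Conf d),
    μ {ω | ∀ s ≤ t, ω s = u s} =
      (if u 0 = U then 1 else 0) *
        ∏ s ∈ Finset.range t, ENNReal.ofReal (hatProb d (u s) (u (s + 1)))

/-- A signed permutation plus translation of `ℤ^d`. -/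
def SymImage (d : ℕ) (σ : Equiv.Perm (Fin d)) (ε : Fin d → ℤ) (v : Pt d) (x : Pt d) : Pt d :=
  fun i => v i + ε i * x (σ i)

/-- `SymEq d U V` holds when `V = gU` for a symmetry `g` of `ℤ^d`. -/
def SymEq (d : ℕ) (U V : Conf d) : Prop :=
  ∃ (σ : Equiv.Perm (Fin d)) (ε : Fin d → ℤ) (v : Pt d),
    (∀ i, ε i = 1 ∨ ε i = -1) ∧ V = U.image (SymImage d σ ε v)

/-- Euclidean distance on `ℤ^d`. -/
noncomputable def dist0 (d : ℕ) (x y : Pt d) : ℝ :=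
  Real.sqrt (∑ i, ((x i : ℝ) - (y i : ℝ)) ^ 2)

/-- Euclidean distance between finite subsets of `ℤ^d`. -/
noncomputable def setDist (d : ℕ) (A B : Finset (Pt d)) : ℝ :=
  sInf {r : ℝ | ∃ x ∈ A, ∃ y ∈ B, r = dist0 d x y}

/-- Euclidean diameter of a finite subset of `ℤ^d`. -/
noncomputable def diam0 (d : ℕ) (A : Finset (Pt d)) : ℝ :=
  sSup {r : ℝ | ∃ x ∈ A, ∃ y ∈ A, r = dist0 d x y}

/-- Lattice (nearest-neighbor) adjacency in `ℤ^d`. -/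
def latAdj (d : ℕ) (x y : Pt d) : Prop := (∑ i, (x i - y i).natAbs) = 1

/-- Exterior lattice boundary of a set. -/
def bdry (d : ℕ) (A : Set (Pt d)) : Set (Pt d) := {z | z ∉ A ∧ ∃ w ∈ A, latAdj d z w}

/-- Non-isolated configurations: some exposed element has a lattice neighbor in the set. -/
def NonIso (d : ℕ) (U : Conf d) : Prop :=
  ∃ x ∈ U, 0 < esc d (↑U) x ∧ ∃ y ∈ U, latAdj d x y

/-- `C` is a clustering (ordered partition into nonempty clusters) of `U`. -/
def IsClusteringOf (d : ℕ) {k : ℕ} (C : Fin k → Finset (Pt d)) (U : Finset (Pt d)) : Prop :=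
  (∀ i, (C i).Nonempty) ∧ (∀ i j, i ≠ j → Disjoint (C i) (C j)) ∧
    Finset.univ.biUnion C = U

/-- `C^{≠ i}`, the union of the clusters other than `i`. -/
def others (d : ℕ) {k : ℕ} (C : Fin k → Finset (Pt d)) (i : Fin k) : Finset (Pt d) :=
  Finset.univ.biUnion fun j => if j = i then ∅ else C j

/-- The separation of a clustering. -/
noncomputable def sep (d : ℕ) {k : ℕ} (C : Fin k → Finset (Pt d)) : ℝ :=
  ⨅ i, setDist d (C i) (others d C i)

/-- `(a, b)` separated dimer-or-trimer (DOT) clusterings. -/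
def IsDOT (d : ℕ) {k : ℕ} (C : Fin k → Finset (Pt d)) (a b : ℝ) : Prop :=
  (∀ i, (C i).card = 2 ∨ (C i).card = 3) ∧ a ≤ sep d C ∧
    ∀ i, diam0 d (C i) ≤ b * Real.log (setDist d (C i) (others d C i))

/-- Clusterings with an unspecified number of clusters. -/
abbrev ClusteringS (d : ℕ) := Σ k : ℕ, Fin k → Finset (Pt d)

/-- `π(C)`, the union of the clusters of `C`. -/
def confOf (d : ℕ) (C : ClusteringS d) : Conf d := Finset.univ.biUnion C.2

/-- `C ∈ 𝒞(U, a, b)`. -/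
def InC (d : ℕ) (U : Conf d) (a b : ℝ) (C : ClusteringS d) : Prop :=
  IsClusteringOf d C.2 U ∧ IsDOT d C.2 a b

/-- `U ∈ 𝒰_{d,n}(a, b)`. -/
def InU (d n : ℕ) (a b : ℝ) (U : Conf d) : Prop :=
  U.card = n ∧ ∃ C : ClusteringS d, InC d U a b C

/-- `C` is a clustering of an `n`-element configuration. -/
def IsClusteringConf (d n : ℕ) (C : ClusteringS d) : Prop :=
  (∀ i, (C.2 i).Nonempty) ∧ (∀ i j, i ≠ j → Disjoint (C.2 i) (C.2 j)) ∧
    (confOf d C).card = n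

open Classical in
/-- One step of the natural clustering. -/
noncomputable def clustStep (d : ℕ) (Ut Ut1 : Conf d) (C : ClusteringS d) : ClusteringS d :=
  if Ut1 = Ut then C
  else if h : ∃ p : Pt d × Pt d × Fin C.1,
      Ut \ Ut1 = {p.1} ∧ Ut1 \ Ut = {p.2.1} ∧ p.1 ∈ C.2 p.2.2 then
    ⟨C.1, Function.update C.2 h.choose.2.2
      (insert h.choose.2.1 ((C.2 h.choose.2.2).erase h.choose.1))⟩
  else ⟨1, fun _ => Ut1⟩

/-- The natural clustering of the trajectory `ω` with initial clustering `C0`. -/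
noncomputable def natClust (d : ℕ) (ω : ℕ → Conf d) (C0 : ClusteringS d) : ℕ → ClusteringS d
  | 0 => C0
  | t + 1 => clustStep d (ω t) (ω (t + 1)) (natClust d ω C0 t)

/-- `a_s = s^{1/2 − n^{−100}} + 100 n`. -/
noncomputable def aSep (n s : ℕ) : ℝ :=
  (s : ℝ) ^ ((1 : ℝ) / 2 - (n : ℝ) ^ (-(100 : ℝ))) + 100 * n

/-- `C^{i, x, y}`: remove `x` from cluster `i` of `C` and add `y` to that cluster. -/
def updC (d : ℕ) (C : ClusteringS d) (i : Fin C.1) (x y : Pt d) : ClusteringS d :=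
  ⟨C.1, Function.update C.2 i (insert y ((C.2 i).erase x))⟩

open Classical in
/-- The transition probabilities of the lifting of HAT to clusterings. -/
noncomputable def liftProb (d : ℕ) (E0 E1 : ClusteringS d) : ℝ :=
  ∑' x : Pt d, ∑' y : Pt d,
    if ∃ i : Fin E0.1, x ∈ E0.2 i ∧ E1 = updC d E0 i x y
    then pHAT d (confOf d E0) x y else 0

/-- The capacity of a clustering: the sum of the capacities of its clusters. -/
noncomputable def capS (d : ℕ) (C : ClusteringS d) : ℝ := ∑ i, capa d (↑(C.2 i))

/-- `H_C(i, x) = esc_{C^i}(x) / cap_C`. -/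
noncomputable def harmS (d : ℕ) (C : ClusteringS d) (i : Fin C.1) (x : Pt d) : ℝ :=
  esc d (↑(C.2 i)) x / capS d C

/-- `q_C(i, x, y)`. -/
noncomputable def qIHAT (d : ℕ) (C : ClusteringS d) (i : Fin C.1) (x y : Pt d) : ℝ :=
  harmS d C i x * transP d ((↑(C.2 i) : Set (Pt d)) \ {x}) x y

open Classical in
/-- The transition probabilities of intracluster HAT (IHAT). -/
noncomputable def ihatProb (d : ℕ) (D E : ClusteringS d) : ℝ :=
  ∑' x : Pt d, ∑' y : Pt d, ∑ i : Fin D.1,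
    if x ∈ D.2 i ∧ E = updC d D i x y then qIHAT d D i x y else 0

instance (d : ℕ) : MeasurableSpace (ClusteringS d) := ⊤

open Classical in
/-- `μ` is the law of the lifted HAT chain started from `E0`. -/
def IsLiftLaw (d : ℕ) (E0 : ClusteringS d) (μ : Measure (ℕ → ClusteringS d)) : Prop :=
  IsProbabilityMeasure μ ∧
  ∀ (t : ℕ) (u : ℕ → ClusteringS d),
    μ {ω | ∀ s ≤ t, ω s = u s} =
      (if u 0 = E0 then 1 else 0) *
        ∏ s ∈ Finset.range t, ENNReal.ofReal (liftProb d (u s) (u (s + 1)))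

open Classical in
/-- `μ` is the law of intracluster HAT started from `D0`. -/
def IsIHATLaw (d : ℕ) (D0 : ClusteringS d) (μ : Measure (ℕ → ClusteringS d)) : Prop :=
  IsProbabilityMeasure μ ∧
  ∀ (t : ℕ) (u : ℕ → ClusteringS d),
    μ {ω | ∀ s ≤ t, ω s = u s} =
      (if u 0 = D0 then 1 else 0) *
        ∏ s ∈ Finset.range t, ENNReal.ofReal (ihatProb d (u s) (u (s + 1)))

/-- `Pairs(E0, E1)`. -/
def Pairs (d : ℕ) (E0 E1 : ClusteringS d) : Set (Pt d × Pt d) :=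
  {p | 0 < pHAT d (confOf d E0) p.1 p.2 ∧
    ∃ i : Fin E0.1, p.1 ∈ E0.2 i ∧ E1 = updC d E0 i p.1 p.2}

/-- `Triples(E0, E1)`. -/
def Triples (d : ℕ) (E0 E1 : ClusteringS d) : Set (Fin E0.1 × Pt d × Pt d) :=
  {q | 0 < qIHAT d E0 q.1 q.2.1 q.2.2 ∧ E1 = updC d E0 q.1 q.2.1 q.2.2}

/-- The first standard basis vector of `ℤ^d`. -/
def e1v (d : ℕ) : Pt d := fun i => if (i : ℕ) = 0 then 1 else 0

/-- Reference dimers and trimers. -/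
def Ref (d : ℕ) : Set (Finset (Pt d)) :=
  {A | ∃ x : Pt d, A = {x, x + e1v d} ∨ A = {x, x + e1v d, x + e1v d + e1v d}}

/-- *-adjacency in `ℤ^d`: distinct points differing by at most one in each coordinate. -/
def starAdj (d : ℕ) (x y : Pt d) : Prop := x ≠ y ∧ ∀ i, (x i - y i).natAbs ≤ 1

/-- The *-visible boundary of `A`. -/
def visBdry (d : ℕ) (A : Finset (Pt d)) : Set (Pt d) :=
  {x | (∃ y ∈ A, starAdj d x y) ∧
    ∃ γ : ℕ → Pt d, γ 0 = x ∧ (∀ t, latAdj d (γ t) (γ (t + 1))) ∧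
      (∀ t, γ t ∉ A) ∧ ∀ r : ℝ, ∃ t, r < dist0 d (γ t) 0}

/-- `A` is connected in the nearest-neighbor graph of `ℤ^d`. -/
def LatConnected (d : ℕ) (A : Finset (Pt d)) : Prop :=
  ∀ x ∈ A, ∀ y ∈ A, ∃ (L : ℕ) (γ : ℕ → Pt d), γ 0 = x ∧ γ L = y ∧
    (∀ t < L, latAdj d (γ t) (γ (t + 1))) ∧ ∀ t ≤ L, γ t ∈ A

/-- Strict lexicographic order on `ℤ^d`. -/
def lexLt (d : ℕ) (x y : Pt d) : Prop :=
  ∃ i : Fin d, (∀ j, j < i → x j = y j) ∧ x i < y i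

/-- `x` is the lex (least) element of `A`. -/
def IsLex (d : ℕ) (A : Finset (Pt d)) (x : Pt d) : Prop :=
  x ∈ A ∧ ∀ y ∈ A, y ≠ x → lexLt d x y

/-!
Consider a finite increasing sequence of radii, each chosen large in terms of the previous one. By
the pigeonhole principle some consecutive pair has no distance of `U` in between, so `U` splits into
clusters that are tiny compared to their mutual distances. A cluster with only one point is removed
by sending this point next to another cluster. Then the other points of every cluster, topmost
first, are put onto the half-line that starts at its foremost point, where they form an interval.
From the end of this interval dimers are walked off along the half-line, the rear point moving to
the front each time, until only a dimer or a trimer is left. The result is a DOT configuration,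
which idles when a point returns to the site it came from, so that all configurations can be given
the same number of steps.

Every step moves a point with nothing above it in some direction: it can climb far away from the
cluster, and there the superharmonic function `4 / (|x|² + 4)`, which is where `d ≥ 5` enters,
bounds the probability of ever returning. In the same way, it can travel above the cluster and
descend onto its new site. The probabilities of these paths depend only on their lengths, hence
only on the radii.
-/

section

variable {d : ℕ}

section InSteps

variable {α β : Type*} {R S : α → α → Prop} {a b c : α} {k l : ℕ}

/-- `InSteps R k a b`: `b` can be reached from `a` in exactly `k` steps of the relation `R`. It is
used for lattice paths as well as for trajectories of HAT. -/
def InSteps (R : α → α → Prop) : ℕ → α → α → Prop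
  | 0, a, b => a = b
  | k + 1, a, b => ∃ c, R a c ∧ InSteps R k c b

namespace InSteps

lemma refl (R : α → α → Prop) (a : α) : InSteps R 0 a a := rfl

lemma single (h : R a b) : InSteps R 1 a b := ⟨b, h, rfl⟩

lemma trans (hab : InSteps R k a b) (hbc : InSteps R l b c) : InSteps R (k + l) a c := by
  induction k generalizing a with
  | zero => obtain rfl : a = b := hab; rwa [Nat.zero_add]
  | succ k ih =>
    obtain ⟨a', haa', ha'b⟩ := hab
    rw [Nat.add_right_comm]
    exact ⟨a', haa', ih ha'b⟩

lemma map (f : α → β) {S : β → β → Prop} (hRS : ∀ a b, R a b → S (f a) (f b))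
    (h : InSteps R k a b) : InSteps S k (f a) (f b) := by
  induction k generalizing a with
  | zero => exact congrArg f h
  | succ k ih =>
    obtain ⟨c, hac, hcb⟩ := h
    exact ⟨f c, hRS _ _ hac, ih hcb⟩

lemma mono (hRS : ∀ a b, R a b → S a b) (h : InSteps R k a b) : InSteps S k a b :=
  h.map id hRS

lemma eq_of_invariant (f : α → β) (hR : ∀ a b, R a b → f b = f a) (h : InSteps R k a b) :
    f b = f a := by
  induction k generalizing a with
  | zero => exact congrArg f (show a = b from h).symm
  | succ k ih =>
    obtain ⟨c, hac, hcb⟩ := h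
    exact (ih hcb).trans (hR _ _ hac)

lemma iterate_of_refl (h : R a a) (k : ℕ) : InSteps R k a a := by
  induction k with
  | zero => rfl
  | succ k ih => exact ⟨a, h, ih⟩

lemma exists_seq (h : InSteps R k a b) :
    ∃ u : ℕ → α, u 0 = a ∧ u k = b ∧ ∀ s < k, R (u s) (u (s + 1)) := by
  induction k generalizing a with
  | zero => exact ⟨fun _ => a, rfl, h, fun s hs => absurd hs s.not_lt_zero⟩
  | succ k ih =>
    obtain ⟨_, hac, hcb⟩ := h
    obtain ⟨u, rfl, huk, hu⟩ := ih hcb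
    refine ⟨fun s => Nat.casesOn s a u, rfl, huk, fun s hs => ?_⟩
    cases s with
    | zero => exact hac
    | succ s => exact hu s (Nat.lt_of_succ_lt_succ hs)

end InSteps

end InSteps

/-! ### First-step analysis of the walk -/

section Walk

/-- The set `Dir d` of unit steps as a `Finset`. -/
def unitSteps (d : ℕ) : Finset (Pt d) :=
  Finset.univ.image fun p : Fin d × ℤˣ => Pi.single p.1 (p.2 : ℤ)

lemma mem_unitSteps {e : Pt d} : e ∈ unitSteps d ↔ e ∈ Dir d := by
  simp only [unitSteps, Dir, Finset.mem_image, Finset.mem_univ, true_and, Prod.exists]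
  refine exists_congr fun i => ⟨?_, ?_⟩
  · rintro ⟨u, rfl⟩
    rcases Int.units_eq_one_or u with rfl | rfl
    exacts [Or.inl rfl, Or.inr rfl]
  · rintro (rfl | rfl)
    exacts [⟨1, rfl⟩, ⟨-1, rfl⟩]

lemma single_one_mem_unitSteps (i : Fin d) : Pi.single i 1 ∈ unitSteps d :=
  mem_unitSteps.2 ⟨i, Or.inl rfl⟩

lemma single_neg_one_mem_unitSteps (i : Fin d) : Pi.single i (-1) ∈ unitSteps d :=
  mem_unitSteps.2 ⟨i, Or.inr rfl⟩

lemma injective_single_units (d : ℕ) :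
    Function.Injective fun p : Fin d × ℤˣ => (Pi.single p.1 (p.2 : ℤ) : Pt d) := by
  rintro ⟨i, u⟩ ⟨j, v⟩ h
  obtain rfl : i = j := by
    by_contra hij
    exact u.ne_zero (by simpa [hij] using congrFun h i)
  exact Prod.ext rfl (Units.ext (Pi.single_injective i h))

lemma card_unitSteps (d : ℕ) : (unitSteps d).card = 2 * d := by
  rw [unitSteps, Finset.card_image_of_injective _ (injective_single_units d), Finset.card_univ,
    Fintype.card_prod, Fintype.card_fin, Fintype.card_units_int, mul_comm]

lemma sum_unitSteps (f : Pt d → ℝ) :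
    ∑ e ∈ unitSteps d, f e = ∑ i, (f (Pi.single i 1) + f (Pi.single i (-1))) := by
  rw [unitSteps, Finset.sum_image (injective_single_units d).injOn, Fintype.sum_prod_type]
  exact Finset.sum_congr rfl fun i _ => Finset.sum_pair (by decide)

/-- The transition operator of simple random walk: `stepMean d f x = E_x[f (S_1)]`. -/
noncomputable def stepMean (d : ℕ) (f : Pt d → ℝ) (x : Pt d) : ℝ :=
  (∑ e ∈ unitSteps d, f (x + e)) / ((2 * d : ℕ) : ℝ)

lemma stepMean_const (hd : 0 < d) (r : ℝ) (x : Pt d) : stepMean d (fun _ => r) x = r := by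
  have h2d : ((2 * d : ℕ) : ℝ) ≠ 0 := by positivity
  rw [stepMean, Finset.sum_const, card_unitSteps, nsmul_eq_mul, mul_div_cancel_left₀ _ h2d]

lemma stepMean_mono {f g : Pt d → ℝ} (h : f ≤ g) (x : Pt d) : stepMean d f x ≤ stepMean d g x :=
  div_le_div_of_nonneg_right (Finset.sum_le_sum fun _ _ => h _) (Nat.cast_nonneg _)

lemma stepMean_add (f g : Pt d → ℝ) (x : Pt d) :
    stepMean d (f + g) x = stepMean d f x + stepMean d g x := by
  simp only [stepMean, Pi.add_apply, Finset.sum_add_distrib, add_div]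

lemma stepMean_sum {ι : Type*} (s : Finset ι) (f : ι → Pt d → ℝ) (x : Pt d) :
    stepMean d (fun y => ∑ i ∈ s, f i y) x = ∑ i ∈ s, stepMean d (f i) x := by
  simp only [stepMean]
  rw [Finset.sum_comm, Finset.sum_div]

lemma div_le_stepMean {f : Pt d → ℝ} (hf : 0 ≤ f) (x : Pt d) {e : Pt d} (he : e ∈ unitSteps d) :
    f (x + e) / ((2 * d : ℕ) : ℝ) ≤ stepMean d f x :=
  div_le_div_of_nonneg_right
    (Finset.single_le_sum (f := fun e => f (x + e)) (fun _ _ => hf _) he) (Nat.cast_nonneg _)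

variable {T : ℕ} {P Q : (Fin T → Pt d) → Prop}

lemma finite_steps (P : (Fin T → Pt d) → Prop) :
    {s : Fin T → Pt d | (∀ i, s i ∈ Dir d) ∧ P s}.Finite :=
  (Set.Finite.pi' fun _ => (unitSteps d).finite_toSet).subset
    fun _ hs i => mem_unitSteps.2 (hs.1 i)

lemma prob_nonneg (P : (Fin T → Pt d) → Prop) : 0 ≤ prob d T P := by
  unfold prob; positivity

lemma prob_congr (h : ∀ s, P s ↔ Q s) : prob d T P = prob d T Q :=
  congrArg (prob d T) (funext fun s => propext (h s))

lemma prob_eq_zero (h : ∀ s, ¬P s) : prob d T P = 0 := by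
  have : IsEmpty {s : Fin T → Pt d // (∀ i, s i ∈ Dir d) ∧ P s} := ⟨fun s => h _ s.2.2⟩
  rw [prob, Nat.card_of_isEmpty, Nat.cast_zero, zero_div]

lemma prob_zero_eq_one {P : (Fin 0 → Pt d) → Prop} (h : ∀ s, P s) : prob d 0 P = 1 := by
  have : Unique {s : Fin 0 → Pt d // (∀ i, s i ∈ Dir d) ∧ P s} :=
    ⟨⟨⟨Fin.elim0, fun i => i.elim0, h _⟩⟩, fun _ => Subtype.ext (Subsingleton.elim _ _)⟩
  rw [prob, Nat.card_unique, Nat.cast_one, pow_zero, div_one]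

lemma prob_le_sum {ι : Type*} {I : Finset ι} {Q : ι → (Fin T → Pt d) → Prop}
    (h : ∀ s, (∀ i, s i ∈ Dir d) → P s → ∃ j ∈ I, Q j s) :
    prob d T P ≤ ∑ j ∈ I, prob d T (Q j) := by
  simp only [prob]
  rw [← Finset.sum_div, ← Nat.cast_sum]
  gcongr
  have hsub : {s : Fin T → Pt d | (∀ i, s i ∈ Dir d) ∧ P s} ⊆
      ⋃ j ∈ I, {s : Fin T → Pt d | (∀ i, s i ∈ Dir d) ∧ Q j s} := by
    rintro s ⟨hs, hP⟩
    obtain ⟨j, hj, hQ⟩ := h s hs hP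
    exact Set.mem_biUnion hj ⟨hs, hQ⟩
  have hfin := I.finite_toSet.biUnion fun j _ => finite_steps (Q j)
  exact (Set.ncard_le_ncard hsub hfin).trans (Finset.set_ncard_biUnion_le I _)

lemma prob_mono (h : ∀ s, P s → Q s) : prob d T P ≤ prob d T Q := by
  simpa using prob_le_sum (I := {()}) (Q := fun _ => Q) fun s _ hs => ⟨(), by simp, h s hs⟩

lemma card_steps_succ (P : (Fin (T + 1) → Pt d) → Prop) :
    Nat.card {s : Fin (T + 1) → Pt d // (∀ i, s i ∈ Dir d) ∧ P s} =
      ∑ e ∈ unitSteps d,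
        Nat.card {s : Fin T → Pt d // (∀ i, s i ∈ Dir d) ∧ P (Fin.cons e s)} := by
  have (e : unitSteps d) : Finite {s : Fin T → Pt d // (∀ i, s i ∈ Dir d) ∧ P (Fin.cons e.1 s)} :=
    (finite_steps _).to_subtype
  rw [← Finset.sum_coe_sort, ← Nat.card_sigma]
  refine Nat.card_congr
    { toFun s := ⟨⟨s.1 0, mem_unitSteps.2 (s.2.1 0)⟩, Fin.tail s.1, fun i => s.2.1 i.succ, ?_⟩
      invFun p := ⟨Fin.cons p.1.1 p.2.1, Fin.cases (mem_unitSteps.1 p.1.2) p.2.2.1, p.2.2.2⟩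
      left_inv s := Subtype.ext (Fin.cons_self_tail s.1)
      right_inv _ := rfl }
  rw [Fin.cons_self_tail]
  exact s.2.2

/-- The Markov property at time one. -/
lemma prob_succ {P : (Fin (T + 1) → Pt d) → Prop} {Q : Pt d → (Fin T → Pt d) → Prop}
    {D : Set (Pt d)} {x : Pt d} (h : ∀ e s, P (Fin.cons e s) ↔ x + e ∈ D ∧ Q (x + e) s) :
    prob d (T + 1) P = stepMean d (D.indicator fun y => prob d T (Q y)) x := by
  have hstep (e : Pt d) : D.indicator (fun y => prob d T (Q y)) (x + e) =
      prob d T fun s => P (Fin.cons e s) := by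
    by_cases he : x + e ∈ D
    · rw [Set.indicator_of_mem he]
      exact prob_congr fun s => by simp only [h, he, true_and]
    · rw [Set.indicator_of_notMem he]
      exact (prob_eq_zero fun s hs => he ((h e s).1 hs).1).symm
  rw [stepMean, Finset.sum_congr rfl fun e _ => hstep e]
  simp only [prob]
  rw [card_steps_succ, ← Finset.sum_div, div_div, pow_succ, Nat.cast_sum]

lemma wpos_zero (x : Pt d) (s : Fin T → Pt d) : wpos d x s 0 = x := by
  simp [wpos]

lemma wpos_cons (x e : Pt d) (s : Fin T → Pt d) (t : ℕ) :
    wpos d x (Fin.cons e s : Fin (T + 1) → Pt d) (t + 1) = wpos d (x + e) s t := by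
  simp [wpos, Finset.sum_filter, Fin.sum_univ_succ, add_assoc]

lemma wpos_cons_one (x e : Pt d) (s : Fin T → Pt d) :
    wpos d x (Fin.cons e s : Fin (T + 1) → Pt d) 1 = x + e :=
  (wpos_cons x e s 0).trans (wpos_zero _ s)

lemma wpos_succ (x : Pt d) (s : Fin T → Pt d) {t : ℕ} (ht : t < T) :
    wpos d x s (t + 1) = wpos d x s t + s ⟨t, ht⟩ := by
  have hfilter : Finset.univ.filter (fun i : Fin T => (i : ℕ) < t + 1) =
      insert ⟨t, ht⟩ (Finset.univ.filter fun i : Fin T => (i : ℕ) < t) := by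
    ext i
    simp only [Finset.mem_filter, Finset.mem_univ, true_and, Finset.mem_insert, Fin.ext_iff]
    omega
  rw [wpos, hfilter, Finset.sum_insert (by simp), wpos, add_assoc, add_comm (s _)]

lemma forall_wpos_cons_notMem {A : Set (Pt d)} {x e : Pt d} {s : Fin T → Pt d} {N : ℕ} :
    (∀ t, 1 ≤ t → t ≤ N + 1 → wpos d x (Fin.cons e s : Fin (T + 1) → Pt d) t ∉ A) ↔
      x + e ∈ Aᶜ ∧ ∀ t, 1 ≤ t → t ≤ N → wpos d (x + e) s t ∉ A := by
  constructor
  · refine fun h => ⟨?_, fun t _ ht => ?_⟩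
    · exact wpos_cons_one x e s ▸ h 1 le_rfl (Nat.le_add_left 1 N)
    · simpa only [wpos_cons] using h (t + 1) (Nat.le_add_left 1 t) (Nat.succ_le_succ ht)
  · rintro ⟨hxe, h⟩ (_ | _ | t) ht1 htN
    · exact absurd ht1 (by norm_num)
    · rwa [wpos_cons_one]
    · rw [wpos_cons]
      exact h _ (Nat.le_add_left 1 t) (Nat.le_of_succ_le_succ htN)

end Walk

section Hitting

/-- `P_x(τ_A > T)`. -/
noncomputable def avoidProb (d : ℕ) (A : Set (Pt d)) (T : ℕ) (x : Pt d) : ℝ :=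
  prob d T fun s => ∀ t, 1 ≤ t → t ≤ T → wpos d x s t ∉ A

/-- `P_x(τ_W = t, S_{t-1} ∈ B)`. The summands of `retProb` and `hitFrom` are the cases
`B = Set.univ` and `B = {y}`. -/
noncomputable def hitProb (d : ℕ) (W B : Set (Pt d)) (t : ℕ) (x : Pt d) : ℝ :=
  prob d t fun s => 1 ≤ t ∧ wpos d x s t ∈ W ∧ wpos d x s (t - 1) ∈ B ∧
    ∀ u, 1 ≤ u → u < t → wpos d x s u ∉ W

variable {A W B : Set (Pt d)} {x y : Pt d} {T t : ℕ}

lemma avoidProb_nonneg (A : Set (Pt d)) (T : ℕ) (x : Pt d) : 0 ≤ avoidProb d A T x :=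
  prob_nonneg _

lemma hitProb_nonneg (W B : Set (Pt d)) (t : ℕ) (x : Pt d) : 0 ≤ hitProb d W B t x :=
  prob_nonneg _

lemma avoidProb_zero (A : Set (Pt d)) : avoidProb d A 0 = 1 :=
  funext fun _ => prob_zero_eq_one fun _ _ h1 h0 => absurd (h1.trans h0) (by norm_num)

lemma avoidProb_succ (A : Set (Pt d)) (T : ℕ) :
    avoidProb d A (T + 1) = stepMean d (Aᶜ.indicator (avoidProb d A T)) :=
  funext fun _ => prob_succ fun _ _ => forall_wpos_cons_notMem

lemma hitProb_zero (W B : Set (Pt d)) (x : Pt d) : hitProb d W B 0 x = 0 :=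
  prob_eq_zero fun _ h => absurd h.1 (by norm_num)

lemma hitProb_one (hx : x ∈ B) : hitProb d W B 1 x = stepMean d (W.indicator 1) x := by
  have h1 : (1 : Pt d → ℝ) = fun _ => prob d 0 fun _ => True :=
    funext fun _ => (prob_zero_eq_one fun _ => trivial).symm
  rw [h1]
  refine prob_succ fun e s => ⟨fun h => ⟨?_, trivial⟩, fun h => ⟨le_rfl, ?_, ?_, ?_⟩⟩
  · exact wpos_cons_one x e s ▸ h.2.1
  · exact (wpos_cons_one x e s).symm ▸ h.1
  · rwa [Nat.sub_self, wpos_zero]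
  · exact fun u hu1 hu => absurd (hu1.trans_lt hu) (lt_irrefl _)

lemma hitProb_succ (W B : Set (Pt d)) (t : ℕ) (x : Pt d) :
    hitProb d W B (t + 2) x = stepMean d (Wᶜ.indicator (hitProb d W B (t + 1))) x := by
  refine prob_succ fun e s => ?_
  simp only [Nat.add_sub_cancel, show t + 2 - 1 = t + 1 from rfl, show t + 2 = t + 1 + 1 from rfl,
    Nat.lt_add_one_iff, forall_wpos_cons_notMem, wpos_cons, Nat.le_add_left, true_and]
  tauto

lemma hitProb_le_univ (W B : Set (Pt d)) (t : ℕ) (x : Pt d) :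
    hitProb d W B t x ≤ hitProb d W Set.univ t x :=
  prob_mono fun _ h => ⟨h.1, h.2.1, trivial, h.2.2.2⟩

lemma avoidProb_eq_add (hd : 0 < d) (A : Set (Pt d)) (T : ℕ) :
    avoidProb d A T = avoidProb d A (T + 1) + hitProb d A Set.univ (T + 1) := by
  induction T with
  | zero =>
    funext x
    rw [Pi.add_apply, zero_add, hitProb_one (Set.mem_univ x), avoidProb_zero, avoidProb_succ,
      avoidProb_zero, ← stepMean_add, Set.indicator_compl_add_self]
    exact (stepMean_const hd 1 x).symm
  | succ T ih =>
    funext x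
    rw [Pi.add_apply, hitProb_succ, avoidProb_succ, avoidProb_succ A (T + 1), ← stepMean_add,
      ← Set.indicator_add', ← ih]

lemma avoidProb_antitone (hd : 0 < d) (A : Set (Pt d)) (x : Pt d) :
    Antitone fun T => avoidProb d A T x :=
  antitone_nat_of_succ_le fun T => by
    rw [avoidProb_eq_add hd A T, Pi.add_apply]
    exact le_add_of_nonneg_right (hitProb_nonneg _ _ _ _)

lemma sum_hitProb_le_one (hd : 0 < d) (W : Set (Pt d)) (x : Pt d) (T : ℕ) :
    ∑ t ∈ Finset.range T, hitProb d W Set.univ t x ≤ 1 := by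
  have hsum (T : ℕ) : ∑ t ∈ Finset.range T, hitProb d W Set.univ (t + 1) x =
      1 - avoidProb d W T x := by
    induction T with
    | zero => simp [avoidProb_zero]
    | succ T ih =>
      rw [Finset.sum_range_succ, ih, avoidProb_eq_add hd W T, Pi.add_apply, sub_add_eq_sub_sub,
        sub_add_cancel]
  cases T with
  | zero => exact zero_le_one
  | succ T =>
    rw [Finset.sum_range_succ', hitProb_zero, add_zero, hsum]
    exact sub_le_self 1 (avoidProb_nonneg _ _ _)

lemma summable_hitProb (hd : 0 < d) (W B : Set (Pt d)) (x : Pt d) :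
    Summable fun t => hitProb d W B t x :=
  .of_nonneg_of_le (fun t => hitProb_nonneg W B t x) (fun t => hitProb_le_univ W B t x) <|
    summable_of_sum_range_le (fun t => hitProb_nonneg W _ t x) (sum_hitProb_le_one hd W x)

lemma retProb_eq_tsum (W : Set (Pt d)) (x : Pt d) :
    retProb d W x = ∑' t, hitProb d W Set.univ t x :=
  tsum_congr fun _ => prob_congr fun _ => by simp only [Set.mem_univ, true_and]

lemma hitFrom_eq_tsum (W : Set (Pt d)) (x y : Pt d) :
    hitFrom d W x y = ∑' t, hitProb d W {y} t x := rfl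

lemma hitFrom_nonneg (W : Set (Pt d)) (x y : Pt d) : 0 ≤ hitFrom d W x y :=
  tsum_nonneg fun _ => prob_nonneg _

lemma retProb_nonneg (W : Set (Pt d)) (x : Pt d) : 0 ≤ retProb d W x :=
  tsum_nonneg fun _ => prob_nonneg _

lemma retProb_le_one (hd : 0 < d) (W : Set (Pt d)) (x : Pt d) : retProb d W x ≤ 1 := by
  rw [retProb_eq_tsum]
  exact Real.tsum_le_of_sum_range_le (fun t => hitProb_nonneg W _ t x) (sum_hitProb_le_one hd W x)

lemma hitFrom_le_retProb (hd : 0 < d) (W : Set (Pt d)) (x y : Pt d) :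
    hitFrom d W x y ≤ retProb d W x := by
  rw [retProb_eq_tsum, hitFrom_eq_tsum]
  exact (summable_hitProb hd W _ x).tsum_le_tsum (fun t => hitProb_le_univ W _ t x)
    (summable_hitProb hd W _ x)

/-- The points outside `W` from which the walk can enter `W` in one step. -/
def outerBoundary (W : Finset (Pt d)) : Finset (Pt d) :=
  (W.biUnion fun w => (unitSteps d).image fun e => w - e) \ W

lemma mem_outerBoundary {W : Finset (Pt d)} :
    y ∈ outerBoundary W ↔ y ∉ W ∧ ∃ e ∈ unitSteps d, y + e ∈ W := by
  simp only [outerBoundary, Finset.mem_sdiff, Finset.mem_biUnion, Finset.mem_image]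
  constructor
  · rintro ⟨⟨w, hw, e, he, rfl⟩, hy⟩
    exact ⟨hy, e, he, by rwa [sub_add_cancel]⟩
  · rintro ⟨hy, e, he, hw⟩
    exact ⟨⟨y + e, hw, e, he, add_sub_cancel_right y e⟩, hy⟩

lemma card_outerBoundary_le (W : Finset (Pt d)) :
    (outerBoundary W).card ≤ W.card * (2 * d) :=
  (Finset.card_le_card Finset.sdiff_subset).trans <|
    Finset.card_biUnion_le_card_mul _ _ _ fun _ _ =>
      Finset.card_image_le.trans (card_unitSteps d).le

lemma hitProb_univ_le_sum {W : Finset (Pt d)} (hx : x ∉ W) (t : ℕ) :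
    hitProb d W Set.univ t x ≤ ∑ y ∈ outerBoundary W, hitProb d W {y} t x := by
  refine prob_le_sum fun s hs ⟨ht, hW, _, havoid⟩ =>
    ⟨wpos d x s (t - 1), mem_outerBoundary.2 ⟨?_, ?_⟩, ht, hW, rfl, havoid⟩
  · rcases ht.eq_or_lt with rfl | ht1
    · rwa [Nat.sub_self, wpos_zero]
    · exact havoid (t - 1) (Nat.le_sub_one_of_lt ht1) (Nat.sub_one_lt_of_lt ht)
  · refine ⟨s ⟨t - 1, Nat.sub_one_lt_of_lt ht⟩, mem_unitSteps.2 (hs _), ?_⟩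
    rw [← wpos_succ, Nat.sub_add_cancel ht]
    exact hW

lemma retProb_le_sum_hitFrom (hd : 0 < d) {W : Finset (Pt d)} (hx : x ∉ W) :
    retProb d W x ≤ ∑ y ∈ outerBoundary W, hitFrom d W x y := by
  simp only [retProb_eq_tsum, hitFrom_eq_tsum]
  rw [← Summable.tsum_finsetSum fun y _ => summable_hitProb hd _ _ x]
  exact (summable_hitProb hd _ _ x).tsum_le_tsum (hitProb_univ_le_sum hx)
    (summable_sum fun y _ => summable_hitProb hd _ _ x)

/-- One nearest-neighbour step from `x` to a point `y` outside `A`. -/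
def AvoidingStep (A : Set (Pt d)) (x y : Pt d) : Prop := y - x ∈ unitSteps d ∧ y ∉ A

lemma AvoidingStep.mono (hAB : A ⊆ B) (h : AvoidingStep B x y) : AvoidingStep A x y :=
  ⟨h.1, fun hy => h.2 (hAB hy)⟩

lemma AvoidingStep.le_stepMean {f : Pt d → ℝ} (hf : 0 ≤ f) (h : AvoidingStep A x y) :
    f y / ((2 * d : ℕ) : ℝ) ≤ stepMean d (Aᶜ.indicator f) x := by
  have := div_le_stepMean (f := Aᶜ.indicator f) (Set.indicator_nonneg fun _ _ => hf _) x h.1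
  rwa [add_sub_cancel, Set.indicator_of_mem (Set.mem_compl h.2)] at this

lemma le_avoidProb_of_path {k : ℕ} (h : InSteps (AvoidingStep A) k x y) :
    avoidProb d A T y / ((2 * d : ℕ) : ℝ) ^ k ≤ avoidProb d A (T + k) x := by
  induction k generalizing x with
  | zero =>
    obtain rfl : x = y := h
    rw [pow_zero, div_one, add_zero]
  | succ k ih =>
    obtain ⟨z, hxz, hzy⟩ := h
    rw [← add_assoc, avoidProb_succ, pow_succ, ← div_div]
    exact (div_le_div_of_nonneg_right (ih hzy) (Nat.cast_nonneg _)).trans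
      (hxz.le_stepMean (avoidProb_nonneg _ _))

lemma le_hitProb_of_path {k : ℕ} {e : Pt d} (he : e ∈ unitSteps d) (hye : y + e ∈ W)
    (h : InSteps (AvoidingStep W) k x y) :
    1 / ((2 * d : ℕ) : ℝ) ^ (k + 1) ≤ hitProb d W {y} (k + 1) x := by
  induction k generalizing x with
  | zero =>
    obtain rfl : x = y := h
    have := div_le_stepMean (f := W.indicator 1) (Set.indicator_nonneg fun _ _ => zero_le_one) x he
    rwa [Set.indicator_of_mem hye, Pi.one_apply, ← hitProb_one (Set.mem_singleton x),
      ← pow_one ((2 * d : ℕ) : ℝ)] at this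
  | succ k ih =>
    obtain ⟨z, hxz, hzy⟩ := h
    rw [hitProb_succ, pow_succ, ← div_div]
    exact (div_le_div_of_nonneg_right (ih hzy) (Nat.cast_nonneg _)).trans
      (hxz.le_stepMean (hitProb_nonneg _ _ _))

lemma le_hitFrom_of_path (hd : 0 < d) {k : ℕ} {e : Pt d} (he : e ∈ unitSteps d)
    (hye : y + e ∈ W) (h : InSteps (AvoidingStep W) k x y) :
    1 / ((2 * d : ℕ) : ℝ) ^ (k + 1) ≤ hitFrom d W x y :=
  (le_hitProb_of_path he hye h).trans <|
    (summable_hitProb hd W {y} x).le_tsum (k + 1) fun t _ => hitProb_nonneg W {y} t x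

end Hitting

/-! ### Escape probabilities -/

section Escape

/-- The squared Euclidean norm. -/
def sqNorm (x : Pt d) : ℝ := ∑ i, (x i : ℝ) ^ 2

lemma sqNorm_nonneg (x : Pt d) : 0 ≤ sqNorm x := Finset.sum_nonneg fun _ _ => sq_nonneg _

lemma sq_le_sqNorm (x : Pt d) (i : Fin d) : (x i : ℝ) ^ 2 ≤ sqNorm x :=
  Finset.single_le_sum (f := fun i => (x i : ℝ) ^ 2) (fun _ _ => sq_nonneg _) (Finset.mem_univ i)

lemma sqNorm_add_single (x : Pt d) (i : Fin d) (c : ℤ) :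
    sqNorm (x + Pi.single i c) = sqNorm x + 2 * c * x i + c ^ 2 := by
  have hcoord (j : Fin d) : (((x + Pi.single i c : Pt d) j : ℤ) : ℝ) ^ 2 =
      (x j : ℝ) ^ 2 + if j = i then 2 * (c : ℝ) * x i + c ^ 2 else 0 := by
    by_cases hj : j = i
    · subst hj
      simp only [Pi.add_apply, Pi.single_eq_same, Int.cast_add, if_true]
      ring
    · simp [hj]
  simp only [sqNorm, hcoord, Finset.sum_add_distrib, Finset.sum_ite_eq', Finset.mem_univ, if_true,
    add_assoc]

/-- The function `4 / (|x|² + 4)`. It equals `1` at the origin, decays at infinity and is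
superharmonic for `d ≥ 5`, so it can replace the Green's function in bounds on hitting
probabilities. -/
noncomputable def barrier (x : Pt d) : ℝ := 4 / (sqNorm x + 4)

lemma barrier_nonneg (x : Pt d) : 0 ≤ barrier x :=
  div_nonneg zero_le_four (add_nonneg (sqNorm_nonneg x) zero_le_four)

lemma barrier_zero : barrier (0 : Pt d) = 1 := by
  simp [barrier, sqNorm]

lemma one_div_add_one_div_le {R x : ℝ} (hR : x ^ 2 + 4 ≤ R) :
    1 / (R + 1 + 2 * x) + 1 / (R + 1 - 2 * x) ≤ 2 / (R + 1) + 10 * x ^ 2 / (R + 1) ^ 3 := by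
  have hplus : 0 < R + 1 + 2 * x := by nlinarith [sq_nonneg (x + 1)]
  have hminus : 0 < R + 1 - 2 * x := by nlinarith [sq_nonneg (x - 1)]
  have hR1 : 0 < R + 1 := by linarith
  have hx : 20 * x ^ 2 ≤ (R + 1) ^ 2 := by nlinarith [sq_nonneg (x ^ 2 - 5), sq_nonneg x]
  rw [div_add_div _ _ hplus.ne' hminus.ne', div_add_div _ _ hR1.ne' (pow_pos hR1 3).ne',
    div_le_div_iff₀ (mul_pos hplus hminus) (by positivity)]
  nlinarith [mul_nonneg hR1.le (mul_nonneg (sq_nonneg x) (sub_nonneg.2 hx))]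

lemma barrier_add_barrier_le (x : Pt d) (i : Fin d) :
    barrier (x + Pi.single i 1) + barrier (x + Pi.single i (-1)) ≤
      4 * (2 / (sqNorm x + 5) + 10 * (x i : ℝ) ^ 2 / (sqNorm x + 5) ^ 3) := by
  have h := one_div_add_one_div_le (add_le_add_left (sq_le_sqNorm x i) 4)
  simp only [barrier, sqNorm_add_single, Int.cast_one, Int.cast_neg]
  calc _ = 4 * (1 / (sqNorm x + 4 + 1 + 2 * x i) + 1 / (sqNorm x + 4 + 1 - 2 * x i)) := by
        rw [mul_add, mul_one_div, mul_one_div]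
        ring_nf
    _ ≤ _ := by
        have h5 : sqNorm x + 5 = sqNorm x + 4 + 1 := by ring
        rw [h5]
        exact mul_le_mul_of_nonneg_left h zero_le_four

lemma stepMean_barrier_le (hd : 5 ≤ d) (x : Pt d) : stepMean d barrier x ≤ barrier x := by
  have hd5 : (5 : ℝ) ≤ d := by exact_mod_cast hd
  have hs := sqNorm_nonneg x
  have hsum : ∑ i, (barrier (x + Pi.single i 1) + barrier (x + Pi.single i (-1))) ≤
      4 * (d * (2 / (sqNorm x + 5)) + 10 * sqNorm x / (sqNorm x + 5) ^ 3) := by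
    refine (Finset.sum_le_sum fun i _ => barrier_add_barrier_le x i).trans_eq ?_
    rw [← Finset.mul_sum, Finset.sum_add_distrib, Finset.sum_const, Finset.card_univ,
      Fintype.card_fin, nsmul_eq_mul, ← Finset.sum_div, ← Finset.mul_sum, ← sqNorm]
  have hmean : stepMean d barrier x ≤ 4 * (1 / (sqNorm x + 5) + sqNorm x / (sqNorm x + 5) ^ 3) := by
    rw [stepMean, sum_unitSteps, div_le_iff₀ (by positivity)]
    refine hsum.trans ?_
    have hd10 : 10 * sqNorm x / (sqNorm x + 5) ^ 3 ≤ 2 * d * (sqNorm x / (sqNorm x + 5) ^ 3) := by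
      rw [mul_div_assoc]
      gcongr
      linarith
    push_cast
    linear_combination 4 * hd10
  refine hmean.trans ?_
  have hR : 1 / (sqNorm x + 5) + sqNorm x / (sqNorm x + 5) ^ 3 ≤ 1 / (sqNorm x + 4) := by
    rw [div_add_div _ _ (by positivity) (by positivity),
      div_le_div_iff₀ (by positivity) (by positivity)]
    nlinarith [mul_nonneg hs hs, mul_nonneg hs (mul_nonneg hs hs)]
  rw [barrier, div_eq_mul_one_div 4]
  exact mul_le_mul_of_nonneg_left hR zero_le_four

lemma stepMean_barrier_sub_le (hd : 5 ≤ d) (w x : Pt d) :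
    stepMean d (fun y => barrier (y - w)) x ≤ barrier (x - w) := by
  refine le_of_eq_of_le ?_ (stepMean_barrier_le hd (x - w))
  simp only [stepMean, sub_add_eq_add_sub]

lemma one_le_avoidProb_add_sum_barrier (hd : 5 ≤ d) (A : Finset (Pt d)) (T : ℕ) (x : Pt d) :
    1 ≤ avoidProb d A T x + ∑ w ∈ A, barrier (x - w) := by
  induction T generalizing x with
  | zero =>
    rw [avoidProb_zero, Pi.one_apply, le_add_iff_nonneg_right]
    exact Finset.sum_nonneg fun w _ => barrier_nonneg _
  | succ T ih =>
    set H : Pt d → ℝ := fun y => ∑ w ∈ A, barrier (y - w) with hH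
    have hstep : (fun _ => 1) ≤ (A : Set (Pt d))ᶜ.indicator (avoidProb d A T) + H := by
      intro y
      rw [Pi.add_apply]
      by_cases hy : y ∈ A
      · rw [Set.indicator_of_notMem (by simpa using hy), zero_add, ← barrier_zero, ← sub_self y]
        exact Finset.single_le_sum (f := fun w => barrier (y - w)) (fun _ _ => barrier_nonneg _) hy
      · rw [Set.indicator_of_mem (by simpa using hy)]
        exact ih y
    calc 1 = stepMean d (fun _ => 1) x := (stepMean_const (by omega) 1 x).symm
      _ ≤ avoidProb d A (T + 1) x + stepMean d H x := by
        rw [avoidProb_succ, ← stepMean_add]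
        exact stepMean_mono hstep x
      _ ≤ avoidProb d A (T + 1) x + H x := by
        rw [hH, stepMean_sum]
        exact add_le_add le_rfl (Finset.sum_le_sum fun w _ => stepMean_barrier_sub_le hd w x)

/-- `Exposed U L x`: from `x` the walk can get far from `U` in at most `L` steps without visiting
`U`. The distance is such that the walk then avoids `U` forever with probability at least `1/2`. -/
def Exposed (U : Conf d) (L : ℕ) (x : Pt d) : Prop :=
  ∃ k ≤ L, ∃ z, InSteps (AvoidingStep U) k x z ∧ ∀ u ∈ U, 8 * (U.card : ℝ) ≤ sqNorm (z - u)

lemma half_le_avoidProb (hd : 5 ≤ d) {U : Conf d} {z : Pt d}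
    (hz : ∀ u ∈ U, 8 * (U.card : ℝ) ≤ sqNorm (z - u)) (T : ℕ) : 1 / 2 ≤ avoidProb d U T z := by
  have hbarrier : ∑ u ∈ U, barrier (z - u) ≤ 1 / 2 := by
    rcases U.eq_empty_or_nonempty with rfl | hU
    · norm_num
    have hcard : (0 : ℝ) < U.card := by exact_mod_cast hU.card_pos
    calc ∑ u ∈ U, barrier (z - u) ≤ U.card • (1 / (2 * (U.card : ℝ))) := by
          refine Finset.sum_le_card_nsmul _ _ _ fun u hu => ?_
          rw [barrier, div_le_div_iff₀ (by linarith [hz u hu]) (by positivity)]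
          linarith [hz u hu]
      _ = 1 / 2 := by rw [nsmul_eq_mul]; field_simp
  linarith [one_le_avoidProb_add_sum_barrier hd U T z]

lemma Exposed.le_esc (hd : 5 ≤ d) {U : Conf d} {L : ℕ} {x : Pt d} (h : Exposed U L x)
    (hx : x ∈ U) : 1 / 2 / ((2 * d : ℕ) : ℝ) ^ L ≤ esc d U x := by
  obtain ⟨k, hkL, z, hpath, hz⟩ := h
  have hd1 : (1 : ℝ) ≤ ((2 * d : ℕ) : ℝ) := by exact_mod_cast (by omega : 1 ≤ 2 * d)
  rw [esc, if_pos (Finset.mem_coe.2 hx)]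
  refine le_ciInf fun T => ?_
  calc 1 / 2 / ((2 * d : ℕ) : ℝ) ^ L ≤ avoidProb d U T z / ((2 * d : ℕ) : ℝ) ^ k := by
        gcongr
        exacts [avoidProb_nonneg _ _ _, half_le_avoidProb hd hz T]
    _ ≤ avoidProb d U (T + k) x := le_avoidProb_of_path hpath
    _ ≤ avoidProb d U T x := avoidProb_antitone (by omega) _ x (Nat.le_add_right T k)

lemma esc_nonneg (A : Set (Pt d)) (x : Pt d) : 0 ≤ esc d A x := by
  unfold esc
  split_ifs
  · exact Real.iInf_nonneg fun T => prob_nonneg _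
  · exact le_rfl

lemma esc_le_one (A : Set (Pt d)) (x : Pt d) : esc d A x ≤ 1 := by
  unfold esc
  split_ifs
  · exact (ciInf_le ⟨0, Set.forall_mem_range.2 fun T => prob_nonneg _⟩ 0).trans_eq
      (congrFun (avoidProb_zero A) x)
  · exact zero_le_one

lemma capa_coe (U : Conf d) : capa d U = ∑ x ∈ U, esc d U x :=
  Finset.tsum_subtype' U fun x => esc d U x

lemma harm_nonneg (U : Conf d) (x : Pt d) : 0 ≤ harm d U x := by
  rw [harm, capa_coe]
  exact div_nonneg (esc_nonneg _ _) (Finset.sum_nonneg fun _ _ => esc_nonneg _ _)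

lemma esc_div_card_le_harm (U : Conf d) (x : Pt d) : esc d U x / U.card ≤ harm d U x := by
  rcases (esc_nonneg U x).eq_or_lt with h0 | hpos
  · rw [← h0, zero_div]
    exact harm_nonneg U x
  have hx : x ∈ U := by
    by_contra hx
    exact hpos.ne' (if_neg hx)
  have hcapa : 0 < ∑ x ∈ U, esc d U x :=
    Finset.sum_pos' (fun _ _ => esc_nonneg _ _) ⟨x, hx, hpos⟩
  rw [harm, capa_coe]
  gcongr
  exact (Finset.sum_le_card_nsmul U _ 1 fun _ _ => esc_le_one _ _).trans_eq (nsmul_one _)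

lemma Exposed.le_harm (hd : 5 ≤ d) {U : Conf d} {L : ℕ} {x : Pt d} (h : Exposed U L x)
    (hx : x ∈ U) : 1 / 2 / ((2 * d : ℕ) : ℝ) ^ L / U.card ≤ harm d U x :=
  (div_le_div_of_nonneg_right (h.le_esc hd hx) (Nat.cast_nonneg _)).trans
    (esc_div_card_le_harm U x)

end Escape

/-! ### One step of HAT -/

section HATStep

lemma transP_nonneg (W : Set (Pt d)) (x y : Pt d) : 0 ≤ transP d W x y :=
  div_nonneg (hitFrom_nonneg _ _ _) (retProb_nonneg _ _)

lemma hitFrom_le_transP (hd : 0 < d) (W : Set (Pt d)) (x y : Pt d) :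
    hitFrom d W x y ≤ transP d W x y := by
  rcases (hitFrom_nonneg W x y).eq_or_lt with h0 | hpos
  · rw [transP, ← h0, zero_div]
  · exact le_div_self hpos.le (hpos.trans_le (hitFrom_le_retProb hd W x y))
      (retProb_le_one hd W x)

lemma exists_le_transP (hd : 0 < d) {W : Finset (Pt d)} {x : Pt d} (hx : x ∉ W)
    (hret : 0 < retProb d W x) :
    ∃ y ∈ outerBoundary W, 1 / ((W.card * (2 * d) : ℕ) : ℝ) ≤ transP d W x y := by
  have hsum : 1 ≤ ∑ y ∈ outerBoundary W, transP d W x y := by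
    simp only [transP]
    rw [← Finset.sum_div, one_le_div hret]
    exact retProb_le_sum_hitFrom hd hx
  have hne : (outerBoundary W).Nonempty := by
    by_contra hempty
    rw [Finset.not_nonempty_iff_eq_empty.1 hempty, Finset.sum_empty] at hsum
    exact absurd hsum (by norm_num)
  have hcard : (0 : ℝ) < (outerBoundary W).card := by exact_mod_cast hne.card_pos
  obtain ⟨y, hy, hle⟩ := Finset.exists_le_of_sum_le
    (f := fun _ => 1 / ((outerBoundary W).card : ℝ)) (g := transP d W x) hne <| by
      rwa [Finset.sum_const, nsmul_eq_mul, mul_one_div_cancel hcard.ne']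
  refine ⟨y, hy, le_trans ?_ hle⟩
  gcongr
  exact card_outerBoundary_le W

lemma pHAT_nonneg (U : Conf d) (x y : Pt d) : 0 ≤ pHAT d U x y :=
  mul_nonneg (harm_nonneg _ _) (transP_nonneg _ _ _)

lemma pHAT_eq_zero_of_notMem {U : Conf d} {x : Pt d} (hx : x ∉ U) (y : Pt d) :
    pHAT d U x y = 0 := by
  rw [pHAT, harm, esc, if_neg (Finset.mem_coe.not.2 hx), zero_div, zero_mul]

lemma pHAT_self_le_hatProb (U : Conf d) (x : Pt d) : pHAT d U x x ≤ hatProb d U U := by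
  rw [hatProb, if_pos rfl]
  have hsummable : Summable fun z => pHAT d U z z :=
    summable_of_ne_finset_zero (s := U) fun z hz => pHAT_eq_zero_of_notMem hz z
  exact hsummable.le_tsum x fun z _ => pHAT_nonneg U z z

open Classical in
lemma pHAT_le_hatProb_of_ne {U V : Conf d} {x y : Pt d} (hx : x ∈ U) (hxy : x ≠ y)
    (hV : V = insert y (U.erase x)) (hVU : V ≠ U) : pHAT d U x y ≤ hatProb d U V := by
  set φ : Pt d → Pt d → ℝ := fun x y =>
    if x ∈ U ∧ x ≠ y ∧ V = insert y (U.erase x) then pHAT d U x y else 0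
  have hφ (a b : Pt d) : 0 ≤ φ a b := ite_nonneg (pHAT_nonneg U a b) le_rfl
  have hinner (a : Pt d) : Summable (φ a) :=
    summable_of_ne_finset_zero (s := V) fun b hb =>
      if_neg fun h : a ∈ U ∧ a ≠ b ∧ V = _ => hb (h.2.2 ▸ Finset.mem_insert_self b _)
  have houter : Summable fun a => ∑' b, φ a b :=
    summable_of_ne_finset_zero (s := U) fun a ha =>
      (tsum_congr fun b => if_neg fun h : a ∈ U ∧ _ => ha h.1).trans tsum_zero
  calc pHAT d U x y = φ x y := (if_pos ⟨hx, hxy, hV⟩).symm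
    _ ≤ ∑' b, φ x b := (hinner x).le_tsum y fun b _ => hφ x b
    _ ≤ ∑' a, ∑' b, φ a b := houter.le_tsum x fun a _ => tsum_nonneg (hφ a)
    _ = hatProb d U V := by rw [hatProb, if_neg hVU]

lemma pHAT_le_hatProb {U : Conf d} {x y : Pt d} (hx : x ∈ U) (hy : y ∉ U.erase x) :
    pHAT d U x y ≤ hatProb d U (insert y (U.erase x)) := by
  rcases eq_or_ne x y with rfl | hxy
  · rw [Finset.insert_erase hx]
    exact pHAT_self_le_hatProb U x
  · refine pHAT_le_hatProb_of_ne hx hxy rfl fun hU => hy (Finset.mem_erase.2 ⟨hxy.symm, ?_⟩)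
    rw [← hU]
    exact Finset.mem_insert_self y _

/-- A lower bound for the probability that an `n`-element configuration makes a prescribed move
which is realised by paths of length at most `L`. -/
noncomputable def moveBound (d n L : ℕ) : ℝ :=
  1 / 2 / ((2 * d : ℕ) : ℝ) ^ L / n * (1 / ((2 * d : ℕ) : ℝ) ^ L)

lemma moveBound_pos (hd : 0 < d) {n : ℕ} (hn : 0 < n) (L : ℕ) : 0 < moveBound d n L := by
  unfold moveBound; positivity

variable {U : Conf d} {x y : Pt d} {L l : ℕ}

lemma Exposed.moveBound_le_hatProb (hd : 5 ≤ d) (h : Exposed U L x) (hx : x ∈ U)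
    (hy : y ∈ outerBoundary (U.erase x)) (hlL : l + 1 ≤ L)
    (hpath : InSteps (AvoidingStep ↑(U.erase x)) l x y) :
    moveBound d U.card L ≤ hatProb d U (insert y (U.erase x)) := by
  obtain ⟨hyU, e, he, hye⟩ := mem_outerBoundary.1 hy
  have hd1 : (1 : ℝ) ≤ ((2 * d : ℕ) : ℝ) := by exact_mod_cast (by omega : 1 ≤ 2 * d)
  refine le_trans ?_ (pHAT_le_hatProb hx hyU)
  rw [pHAT, ← Finset.coe_erase]
  refine mul_le_mul (h.le_harm hd hx) ?_ (by positivity) (harm_nonneg _ _)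
  calc 1 / ((2 * d : ℕ) : ℝ) ^ L ≤ 1 / ((2 * d : ℕ) : ℝ) ^ (l + 1) := by gcongr
    _ ≤ hitFrom d ↑(U.erase x) x y := le_hitFrom_of_path (by omega) he hye hpath
    _ ≤ transP d ↑(U.erase x) x y := hitFrom_le_transP (by omega) _ x y

/-- The walk started at `x` exits through one of at most `2d|U|` points, so one of them is hit with
probability bounded below, however long the connecting path is. -/
lemma Exposed.exists_le_hatProb (hd : 5 ≤ d) (h : Exposed U L x) (hx : x ∈ U)
    (hy : y ∈ outerBoundary (U.erase x)) (hpath : InSteps (AvoidingStep ↑(U.erase x)) l x y) :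
    ∃ z ∈ outerBoundary (U.erase x),
      1 / 2 / ((2 * d : ℕ) : ℝ) ^ L / U.card * (1 / ((U.card * (2 * d) : ℕ) : ℝ)) ≤
        hatProb d U (insert z (U.erase x)) := by
  obtain ⟨-, e, he, hye⟩ := mem_outerBoundary.1 hy
  have hd0 : 0 < d := by omega
  have hret : 0 < retProb d ↑(U.erase x) x :=
    calc (0 : ℝ) < 1 / ((2 * d : ℕ) : ℝ) ^ (l + 1) := by positivity
      _ ≤ hitFrom d ↑(U.erase x) x y := le_hitFrom_of_path hd0 he hye hpath
      _ ≤ retProb d ↑(U.erase x) x := hitFrom_le_retProb hd0 _ x y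
  obtain ⟨z, hz, hle⟩ := exists_le_transP hd0 (Finset.notMem_erase x U) hret
  have hcard : 0 < (U.erase x).card := Finset.card_pos.2 ⟨y + e, hye⟩
  refine ⟨z, hz, le_trans ?_ (pHAT_le_hatProb hx (mem_outerBoundary.1 hz).1)⟩
  rw [pHAT, ← Finset.coe_erase]
  refine mul_le_mul (h.le_harm hd hx) (le_trans ?_ hle) (by positivity) (harm_nonneg _ _)
  gcongr
  exact Finset.erase_subset x U

end HATStep

/-! ### Lattice paths and controlled moves -/

section Geometry

variable {x y z o : Pt d} {k l : ℕ}

lemma dist_le_natCast_iff : dist x y ≤ k ↔ ∀ i, |x i - y i| ≤ k := by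
  rw [dist_pi_le_iff (Nat.cast_nonneg k)]
  refine forall_congr' fun i => ?_
  rw [Int.dist_eq]
  exact_mod_cast Iff.rfl

lemma mem_uIcc_apply {p : Pt d} (hp : p ∈ Set.uIcc x y) (i : Fin d) :
    p i ∈ Set.uIcc (x i) (y i) := by
  rw [← Set.pi_univ_uIcc] at hp
  exact hp i trivial

lemma dist_le_of_mem_uIcc {p : Pt d} (hx : dist x o ≤ k) (hy : dist y o ≤ k)
    (hp : p ∈ Set.uIcc x y) : dist p o ≤ k := by
  rw [dist_le_natCast_iff] at *
  intro i
  have hxi := abs_le.1 (hx i)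
  have hyi := abs_le.1 (hy i)
  have hpi := Set.mem_uIcc.1 (mem_uIcc_apply hp i)
  rw [abs_le]
  omega

lemma dist_add_unitStep {e : Pt d} (he : e ∈ unitSteps d) (x : Pt d) : dist x (x + e) ≤ 1 := by
  obtain ⟨i, rfl | rfl⟩ := mem_unitSteps.1 he <;>
  · rw [dist_self_add_right, Pi.norm_single]
    norm_num

/-- The `ℓ¹` distance, which is the length of the shortest lattice paths. -/
def l1Dist (x y : Pt d) : ℕ := ∑ i, (x i - y i).natAbs

lemma l1Dist_le_of_dist_le (hx : dist x o ≤ k) (hy : dist y o ≤ k) :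
    l1Dist x y ≤ d * (2 * k) := by
  rw [dist_le_natCast_iff] at hx hy
  refine (Finset.sum_le_card_nsmul _ _ (2 * k) fun i _ => ?_).trans_eq ?_
  · have hxi := abs_le.1 (hx i)
    have hyi := abs_le.1 (hy i)
    omega
  · rw [Finset.card_univ, Fintype.card_fin, smul_eq_mul]

lemma l1Dist_le_of_mem_uIcc (h : z ∈ Set.uIcc x y) : l1Dist z y ≤ l1Dist x y := by
  refine Finset.sum_le_sum fun i _ => ?_
  have := Set.mem_uIcc.1 (mem_uIcc_apply h i)
  omega

lemma exists_unitStep_towards (h : x ≠ y) :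
    ∃ e ∈ unitSteps d, x + e ∈ Set.uIcc x y ∧ l1Dist (x + e) y + 1 = l1Dist x y := by
  obtain ⟨i, hi⟩ := Function.ne_iff.1 h
  obtain ⟨c, hc, hci⟩ : ∃ c : ℤ, (c = 1 ∨ c = -1) ∧ (x i < y i ∧ c = 1 ∨ y i < x i ∧ c = -1) := by
    rcases lt_or_gt_of_ne hi with hlt | hlt
    exacts [⟨1, by simp, by simp [hlt]⟩, ⟨-1, by simp, by simp [hlt]⟩]
  have hsame : (x + Pi.single i c : Pt d) i = x i + c := by simp
  have hother (j : Fin d) (hj : j ≠ i) : (x + Pi.single i c : Pt d) j = x j := by simp [hj]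
  refine ⟨Pi.single i c, ?_, ?_, ?_⟩
  · rcases hc with rfl | rfl
    exacts [single_one_mem_unitSteps i, single_neg_one_mem_unitSteps i]
  · rw [← Set.pi_univ_uIcc]
    intro j _
    rcases eq_or_ne j i with rfl | hj
    · have : x j + c ∈ Set.uIcc (x j) (y j) := Set.mem_uIcc.2 (by omega)
      rwa [hsame]
    · rw [hother j hj]
      exact Set.left_mem_uIcc
  · have hrest : ∑ j ∈ Finset.univ.erase i, ((x + Pi.single i c : Pt d) j - y j).natAbs =
        ∑ j ∈ Finset.univ.erase i, (x j - y j).natAbs :=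
      Finset.sum_congr rfl fun j hj => by rw [hother j (Finset.ne_of_mem_erase hj)]
    rw [l1Dist, l1Dist, ← Finset.add_sum_erase _ _ (Finset.mem_univ i),
      ← Finset.add_sum_erase Finset.univ (fun j => (x j - y j).natAbs) (Finset.mem_univ i), hrest,
      hsame]
    omega

lemma path_of_uIcc {A : Set (Pt d)} (hA : ∀ p ∈ Set.uIcc x y, p ≠ x → p ∉ A) :
    InSteps (AvoidingStep A) (l1Dist x y) x y := by
  induction hn : l1Dist x y generalizing x with
  | zero =>
    by_contra hxy
    obtain ⟨e, _, _, he⟩ := exists_unitStep_towards hxy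
    omega
  | succ n ih =>
    have hxy : x ≠ y := by
      rintro rfl
      simp [l1Dist] at hn
    obtain ⟨e, he, hmem, hdist⟩ := exists_unitStep_towards hxy
    have hnotMem : x ∉ Set.uIcc (x + e) y := fun hx => by
      have := l1Dist_le_of_mem_uIcc hx
      omega
    have hne : x + e ≠ x := fun h => hnotMem (by simp only [h, Set.left_mem_uIcc])
    refine ⟨x + e, ⟨by rwa [add_sub_cancel_left], hA _ hmem hne⟩, ih (fun p hp _ => ?_) (by omega)⟩
    refine hA p (Set.uIcc_subset_uIcc hmem Set.right_mem_uIcc hp) ?_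
    rintro rfl
    exact hnotMem hp

lemma exists_path_to_outerBoundary {W : Finset (Pt d)} (hx : x ∉ W) (hy : y ∈ W)
    (h : InSteps (AvoidingStep ∅) k x y) :
    ∃ l, ∃ z ∈ outerBoundary W, InSteps (AvoidingStep W) l x z := by
  induction k generalizing x with
  | zero => exact absurd ((show x = y from h) ▸ hy) hx
  | succ k ih =>
    obtain ⟨x', hxx', hx'y⟩ := h
    by_cases hx' : x' ∈ W
    · refine ⟨0, x, mem_outerBoundary.2 ⟨hx, x' - x, hxx'.1, ?_⟩, rfl⟩
      rwa [add_sub_cancel]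
    · obtain ⟨l, z, hz, hpath⟩ := ih hx' hx'y
      exact ⟨l + 1, z, hz, x', ⟨hxx'.1, hx'⟩, hpath⟩

lemma exists_dist_le_one_of_mem_outerBoundary {W : Finset (Pt d)} (hy : y ∈ outerBoundary W) :
    ∃ w ∈ W, dist y w ≤ 1 := by
  obtain ⟨-, e, he, hw⟩ := mem_outerBoundary.1 hy
  exact ⟨y + e, hw, dist_add_unitStep he y⟩

end Geometry

section Moves

variable {U : Conf d} {A : Set (Pt d)} {o x y : Pt d} {i : Fin d} {r n : ℕ} {c : ℝ}

/-- No point of `A` has distance in `(r, r + m]` from `o`. -/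
def EmptyAnnulus (A : Set (Pt d)) (o : Pt d) (r m : ℕ) : Prop :=
  ∀ u ∈ A, dist u o ≤ (r + m : ℕ) → dist u o ≤ r

/-- Inside the ball of radius `r` around `o`, the set `A` has no point above `x` in direction
`i`. -/
def ClearAbove (A : Set (Pt d)) (o : Pt d) (r : ℕ) (i : Fin d) (x : Pt d) : Prop :=
  ∀ u ∈ A, dist u o ≤ r → (∀ j ≠ i, u j = x j) → u i ≤ x i

/-- The point above `x` in direction `i` at height `r + 4n` relative to `o`; it is outside the ball
of radius `r` around `o` and, if that ball is surrounded by an empty annulus of width `8n`, far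
from everything else. -/
def lift (o : Pt d) (i : Fin d) (r n : ℕ) (x : Pt d) : Pt d :=
  Function.update x i (o i + r + 4 * n)

lemma lift_same : lift o i r n x i = o i + r + 4 * n := Function.update_self ..

lemma lift_of_ne {j : Fin d} (hj : j ≠ i) : lift o i r n x j = x j := Function.update_of_ne hj ..

lemma dist_lift_le (hx : dist x o ≤ r) : dist (lift o i r n x) o ≤ (r + 4 * n : ℕ) := by
  rw [dist_le_natCast_iff] at hx ⊢
  intro j
  rcases eq_or_ne j i with rfl | hj
  · rw [lift_same, abs_le]
    omega
  · rw [lift_of_ne hj]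
    exact (hx j).trans (by push_cast; omega)

lemma mem_uIcc_lift {p : Pt d} (hx : dist x o ≤ r) (hp : p ∈ Set.uIcc x (lift o i r n x)) :
    (∀ j ≠ i, p j = x j) ∧ x i ≤ p i := by
  have hxi := abs_le.1 (dist_le_natCast_iff.1 hx i)
  refine ⟨fun j hj => ?_, ?_⟩
  · simpa only [lift_of_ne hj, Set.uIcc_self, Set.mem_singleton_iff] using mem_uIcc_apply hp j
  · have := mem_uIcc_apply hp i
    rw [lift_same, Set.mem_uIcc] at this
    omega

lemma dist_le_of_mem_uIcc_lift {p : Pt d} (hA : EmptyAnnulus A o r (8 * n)) (hx : dist x o ≤ r)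
    (hp : p ∈ Set.uIcc x (lift o i r n x)) (hpA : p ∈ A) : dist p o ≤ r := by
  have hp4 : dist p o ≤ (r + 4 * n : ℕ) :=
    dist_le_of_mem_uIcc (hx.trans (Nat.cast_le.2 (Nat.le_add_right r _))) (dist_lift_le hx) hp
  exact hA p hpA (hp4.trans (Nat.cast_le.2 (by omega)))

lemma path_up (hA : EmptyAnnulus A o r (8 * n)) (hx : dist x o ≤ r)
    (hclear : ClearAbove A o r i x) :
    InSteps (AvoidingStep A) (l1Dist x (lift o i r n x)) x (lift o i r n x) := by
  refine path_of_uIcc fun p hp hpx hpA => hpx ?_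
  obtain ⟨hcol, hle⟩ := mem_uIcc_lift hx hp
  have hge := hclear p hpA (dist_le_of_mem_uIcc_lift hA hx hp hpA) hcol
  funext j
  rcases eq_or_ne j i with rfl | hj
  exacts [hge.antisymm hle, hcol j hj]

lemma path_down (hA : EmptyAnnulus A o r (8 * n)) (hy : dist y o ≤ r)
    (hclear : ClearAbove A o r i y) (hyA : y ∉ A) :
    InSteps (AvoidingStep A) (l1Dist (lift o i r n y) y) (lift o i r n y) y := by
  refine path_of_uIcc fun p hp _ hpA => hyA ?_
  rw [Set.uIcc_comm] at hp
  obtain ⟨hcol, hle⟩ := mem_uIcc_lift hy hp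
  have hge := hclear p hpA (dist_le_of_mem_uIcc_lift hA hy hp hpA) hcol
  have hpy : p = y := by
    funext j
    rcases eq_or_ne j i with rfl | hj
    exacts [hge.antisymm hle, hcol j hj]
  exact hpy ▸ hpA

lemma path_across (hn : 0 < n) (hA : EmptyAnnulus A o r (8 * n)) (hx : dist x o ≤ r)
    (hy : dist y o ≤ r) :
    InSteps (AvoidingStep A) (l1Dist (lift o i r n x) (lift o i r n y)) (lift o i r n x)
      (lift o i r n y) := by
  refine path_of_uIcc fun p hp _ hpA => ?_
  have hp4 := dist_le_of_mem_uIcc (dist_lift_le hx) (dist_lift_le hy) hp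
  have hpr := hA p hpA (hp4.trans (Nat.cast_le.2 (by omega)))
  have hpi := abs_le.1 (dist_le_natCast_iff.1 hpr i)
  have := mem_uIcc_apply hp i
  rw [lift_same, lift_same, Set.uIcc_self, Set.mem_singleton_iff] at this
  omega

lemma le_sqNorm_of_le_dist {n : ℕ} (h : (4 * n : ℕ) ≤ dist x y) : 8 * (n : ℝ) ≤ sqNorm (x - y) := by
  obtain rfl | hn := n.eq_zero_or_pos
  · simpa using sqNorm_nonneg (x - y)
  obtain ⟨i, hi⟩ : ∃ i, (4 * n : ℤ) ≤ |x i - y i| := by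
    by_contra! hlt
    have hle : dist x y ≤ (4 * n - 1 : ℕ) := dist_le_natCast_iff.2 fun i => by
      have := hlt i
      omega
    have : 4 * n ≤ 4 * n - 1 := Nat.cast_le.1 (h.trans hle)
    omega
  have hi' : (4 * n : ℝ) ≤ |((x - y) i : ℤ)| := by
    rw [Pi.sub_apply]
    exact_mod_cast hi
  have hn1 : (1 : ℝ) ≤ n := by exact_mod_cast hn
  calc 8 * (n : ℝ) ≤ (4 * n) ^ 2 := by nlinarith
    _ ≤ |((x - y) i : ℤ)| ^ 2 := by gcongr
    _ = ((x - y) i : ℝ) ^ 2 := by push_cast; exact sq_abs _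
    _ ≤ sqNorm (x - y) := sq_le_sqNorm _ i

lemma le_dist_lift (hA : EmptyAnnulus A o r (8 * n)) (hx : dist x o ≤ r) {u : Pt d} (hu : u ∈ A) :
    (4 * n : ℕ) ≤ dist (lift o i r n x) u := by
  by_contra! hlt
  have hlift := dist_lift_le (i := i) (n := n) hx
  have hur : dist u o ≤ r := by
    refine hA u hu ((dist_triangle_left u o (lift o i r n x)).trans ?_)
    push_cast at *
    linarith
  have hui := abs_le.1 (dist_le_natCast_iff.1 hur i)
  have hi := (abs_le.1 (dist_le_natCast_iff.1 hlt.le i)).2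
  rw [lift_same] at hi
  have heq : lift o i r n x i - u i = 4 * n := by rw [lift_same]; omega
  have := dist_le_pi_dist (lift o i r n x) u i
  rw [Int.dist_eq, ← Int.cast_sub, heq] at this
  push_cast at *
  rw [abs_of_nonneg (by positivity)] at this
  linarith

lemma exposed_of_clearAbove (hU : EmptyAnnulus U o r (8 * U.card)) (hx : dist x o ≤ r)
    (hclear : ClearAbove U o r i x) : Exposed U (d * (2 * (r + 4 * U.card))) x :=
  ⟨_, l1Dist_le_of_dist_le (hx.trans (Nat.cast_le.2 (Nat.le_add_right r _))) (dist_lift_le hx), _,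
    path_up hU hx hclear, fun _ hu => le_sqNorm_of_le_dist (le_dist_lift hU hx hu)⟩

/-- `V` can be reached from `U` by one step of HAT of probability at least `c`. -/
def HATStep (c : ℝ) (U V : Conf d) : Prop := V.card = U.card ∧ c ≤ hatProb d U V

lemma HATStep.mono {c' : ℝ} (hc : c ≤ c') {V : Conf d} (h : HATStep c' U V) : HATStep c U V :=
  ⟨h.1, hc.trans h.2⟩

lemma card_insert_erase (hx : x ∈ U) (hy : y ∉ U.erase x) :
    (insert y (U.erase x)).card = U.card := by
  rw [Finset.card_insert_of_notMem hy, Finset.card_erase_add_one hx]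

/-- A bound on the lengths of the paths that realise moves within a ball of radius `r`. -/
def moveLength (d n r : ℕ) : ℕ := 3 * (d * (2 * (r + 4 * n))) + 1

/-- The walk goes up from `x`, across above the ball around `o`, and comes down on `y`. -/
lemma hatStep_of_clearAbove (hd : 5 ≤ d) (hcard : U.card = n) (hU : EmptyAnnulus U o r (8 * n))
    (hxU : x ∈ U) (hx : dist x o ≤ r) (hy : dist y o ≤ r) (hclearx : ClearAbove U o r i x)
    (hcleary : ClearAbove ↑(U.erase x) o r i y) (hyU : y ∈ outerBoundary (U.erase x)) :
    HATStep (moveBound d n (moveLength d n r)) U (insert y (U.erase x)) := by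
  subst hcard
  have hyU' := (mem_outerBoundary.1 hyU).1
  refine ⟨card_insert_erase hxU hyU', ?_⟩
  have hn : 0 < U.card := Finset.card_pos.2 ⟨x, hxU⟩
  have hsub : (↑(U.erase x) : Set (Pt d)) ⊆ U := Finset.coe_subset.2 (Finset.erase_subset x U)
  have hUx : EmptyAnnulus ↑(U.erase x) o r (8 * U.card) := fun u hu => hU u (hsub hu)
  have hpath := ((path_up hU hx hclearx).mono fun _ _ h => h.mono hsub).trans
    ((path_across (i := i) hn hUx hx hy).trans (path_down hUx hy hcleary hyU'))
  have hexposed := exposed_of_clearAbove hU hx hclearx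
  have hx4 := hx.trans (Nat.cast_le.2 (Nat.le_add_right r (4 * U.card)))
  have hy4 := hy.trans (Nat.cast_le.2 (Nat.le_add_right r (4 * U.card)))
  have hup := l1Dist_le_of_dist_le hx4 (dist_lift_le (i := i) hx)
  have hacross := l1Dist_le_of_dist_le (dist_lift_le (i := i) (n := U.card) hx)
    (dist_lift_le (i := i) hy)
  have hdown := l1Dist_le_of_dist_le (dist_lift_le (i := i) hy) hy4
  obtain ⟨k, hk, hexp⟩ := hexposed
  refine Exposed.moveBound_le_hatProb hd ⟨k, ?_, hexp⟩ hxU hyU ?_ hpath <;>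
  · unfold moveLength
    omega

/-- The probability guaranteed for sending an isolated point of an `n`-element configuration to
another part of the configuration. -/
noncomputable def isolatedBound (d n : ℕ) : ℝ :=
  1 / 2 / ((2 * d : ℕ) : ℝ) ^ (d * (2 * (0 + 4 * n))) / n * (1 / ((n * (2 * d) : ℕ) : ℝ))

lemma isolatedBound_pos (hd : 0 < d) (hn : 0 < n) : 0 < isolatedBound d n := by
  unfold isolatedBound; positivity

lemma exists_hatStep_of_isolated (hd : 5 ≤ d) (hn : 2 ≤ U.card) (hx : x ∈ U)
    (hann : EmptyAnnulus U x 0 (8 * U.card)) :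
    ∃ y ∈ outerBoundary (U.erase x), HATStep (isolatedBound d U.card) U (insert y (U.erase x)) := by
  have hexposed : Exposed U (d * (2 * (0 + 4 * U.card))) x := by
    refine exposed_of_clearAbove (i := ⟨0, by omega⟩) hann (by simp) fun u _ hu _ => le_of_eq ?_
    rw [Nat.cast_zero, dist_le_zero] at hu
    rw [hu]
  obtain ⟨w, hw⟩ : (U.erase x).Nonempty := by
    rw [← Finset.card_pos, Finset.card_erase_of_mem hx]
    omega
  obtain ⟨l, y, hy, hpath⟩ := exists_path_to_outerBoundary (Finset.notMem_erase x U) hw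
    (path_of_uIcc fun p _ _ => Set.notMem_empty p)
  obtain ⟨z, hz, hle⟩ := hexposed.exists_le_hatProb hd hx hy hpath
  exact ⟨z, hz, card_insert_erase hx (mem_outerBoundary.1 hz).1, hle⟩

end Moves

section LocalMove

variable {W W' B : Conf d} {o : Pt d} {R n k : ℕ}

/-- `W'` arises from `W`, which lies in the ball of radius `R` around `o`, by moving one point to a
vacant site of that ball next to another point; in some direction, no point of `W` lies above the
old and the new position. -/
def LocalMove (o : Pt d) (R : ℕ) (W W' : Conf d) : Prop :=
  (∀ u ∈ W, dist u o ≤ R) ∧ ∃ x ∈ W, ∃ y ∈ outerBoundary (W.erase x), dist y o ≤ R ∧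
    (∃ i, ClearAbove W o R i x ∧ ClearAbove ↑(W.erase x) o R i y) ∧ W' = insert y (W.erase x)

lemma LocalMove.hatStep (hd : 5 ≤ d) (hB : ∀ b ∈ B, (R + 8 * n : ℕ) < dist b o)
    (hcard : (W ∪ B).card = n) (h : LocalMove o R W W') :
    HATStep (moveBound d n (moveLength d n R)) (W ∪ B) (W' ∪ B) := by
  obtain ⟨hW, x, hx, y, hy, hyo, ⟨i, hclearx, hcleary⟩, rfl⟩ := h
  have hfar (b : Pt d) (hb : b ∈ B) : ¬ dist b o ≤ R := fun hbR =>
    (hB b hb).not_ge (hbR.trans (Nat.cast_le.2 (Nat.le_add_right R _)))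
  have hclear {A : Conf d} {z : Pt d} (hA : ClearAbove A o R i z) :
      ClearAbove ↑(A ∪ B) o R i z := fun u hu huo =>
    hA u ((Finset.mem_union.1 hu).resolve_right fun hb => hfar u hb huo) huo
  have herase : (W ∪ B).erase x = W.erase x ∪ B := by
    rw [Finset.erase_union_distrib, Finset.erase_eq_of_notMem fun hb => hfar x hb (hW x hx)]
  have hannulus : EmptyAnnulus ↑(W ∪ B) o R (8 * n) := fun u hu huo =>
    (Finset.mem_union.1 hu).elim (hW u) fun hb => absurd huo (hB u hb).not_ge
  have hyB : y ∈ outerBoundary ((W ∪ B).erase x) := by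
    obtain ⟨hyW, e, he, hmem⟩ := mem_outerBoundary.1 hy
    rw [herase]
    exact mem_outerBoundary.2 ⟨fun hyWB => (Finset.mem_union.1 hyWB).elim hyW fun hb =>
      hfar y hb hyo, e, he, Finset.mem_union_left B hmem⟩
  rw [Finset.insert_union, ← herase]
  refine hatStep_of_clearAbove hd hcard hannulus (Finset.mem_union_left B hx) (hW x hx) hyo
    (hclear hclearx) ?_ hyB
  rw [herase]
  exact hclear hcleary

lemma inSteps_hatStep_of_localMove (hd : 5 ≤ d) (hB : ∀ b ∈ B, (R + 8 * n : ℕ) < dist b o)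
    (hcard : (W ∪ B).card = n) (h : InSteps (LocalMove o R) k W W') :
    InSteps (HATStep (moveBound d n (moveLength d n R))) k (W ∪ B) (W' ∪ B) := by
  induction k generalizing W with
  | zero => exact congrArg (· ∪ B) (show W = W' from h)
  | succ k ih =>
    obtain ⟨V, hWV, hVW'⟩ := h
    have hstep := hWV.hatStep hd hB hcard
    exact ⟨V ∪ B, hstep, ih (hstep.1.trans hcard) hVW'⟩

end LocalMove

/-! ### Splitting an interval into dimers and trimers -/

section Interval

variable {I J K : Finset ℕ} {a k m n N N' p : ℕ}

/-- `J` arises from `I ⊆ [0, N]` by moving one point to the vacant site to the right of another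
one. -/
def IntervalMove (N : ℕ) (I J : Finset ℕ) : Prop :=
  (∀ i ∈ I, i ≤ N) ∧ ∃ j ∈ I, ∃ w ∈ I.erase j, w + 1 ≤ N ∧ w + 1 ∉ I.erase j ∧
    J = insert (w + 1) (I.erase j)

/-- Unions of intervals with two or three elements and gaps longer than `a`. -/
inductive IsSplit (a : ℕ) : Finset ℕ → Prop
  | empty : IsSplit a ∅
  | union_Ico {J : Finset ℕ} {p l : ℕ} : IsSplit a J → (∀ j ∈ J, j + a < p) → l = 2 ∨ l = 3 →
      IsSplit a (J ∪ Finset.Ico p (p + l))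

lemma IntervalMove.mono (hN : N ≤ N') (h : IntervalMove N I J) : IntervalMove N' I J := by
  obtain ⟨hI, j, hj, w, hw, hwN, hvac, hJ⟩ := h
  exact ⟨fun i hi => (hI i hi).trans hN, j, hj, w, hw, hwN.trans hN, hvac, hJ⟩

lemma IntervalMove.union (hN : N ≤ N') (hK : ∀ i ∈ K, N < i ∧ i ≤ N') (h : IntervalMove N I J) :
    IntervalMove N' (I ∪ K) (J ∪ K) := by
  obtain ⟨hI, j, hj, w, hw, hwN, hvac, rfl⟩ := h
  have hnotMem (i : ℕ) (hi : i ≤ N) : i ∉ K := fun hiK => (hK i hiK).1.not_ge hi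
  have herase : (I ∪ K).erase j = I.erase j ∪ K := by
    rw [Finset.erase_union_distrib, Finset.erase_eq_of_notMem (hnotMem j (hI j hj))]
  refine ⟨fun i hi => ?_, j, Finset.mem_union_left K hj, w, ?_, hwN.trans hN, ?_, ?_⟩
  · exact (Finset.mem_union.1 hi).elim (fun hi => (hI i hi).trans hN) fun hi => (hK i hi).2
  · rw [herase]
    exact Finset.mem_union_left K hw
  · rw [herase, Finset.mem_union, not_or]
    exact ⟨hvac, hnotMem _ hwN⟩
  · rw [herase, Finset.insert_union]

lemma intervalMove_dimer (hI : ∀ i ∈ I, i < p) (hN : p + 2 ≤ N) :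
    IntervalMove N (I ∪ Finset.Ico p (p + 2)) (I ∪ Finset.Ico (p + 1) (p + 3)) := by
  refine ⟨fun i hi => ?_, p, by simp, p + 1, by simp, hN, fun hmem => ?_, ?_⟩
  · rcases Finset.mem_union.1 hi with hi | hi
    · exact (hI i hi).le.trans (by omega)
    · exact (Finset.mem_Ico.1 hi).2.le.trans hN
  · rcases Finset.mem_union.1 (Finset.mem_of_mem_erase hmem) with hi | hi
    · exact absurd (hI _ hi) (by omega)
    · exact absurd (Finset.mem_Ico.1 hi).2 (by omega)
  · ext i
    have := hI i
    simp only [Finset.mem_insert, Finset.mem_erase, Finset.mem_union, Finset.mem_Ico]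
    grind

lemma inSteps_intervalMove_dimer (hI : ∀ i ∈ I, i < p) (hN : p + k + 1 ≤ N) :
    InSteps (IntervalMove N) k (I ∪ Finset.Ico p (p + 2))
      (I ∪ Finset.Ico (p + k) (p + k + 2)) := by
  induction k generalizing p with
  | zero => rfl
  | succ k ih =>
    refine ⟨_, intervalMove_dimer hI (by omega), ?_⟩
    have := ih (p := p + 1) (fun i hi => (hI i hi).trans p.lt_succ_self) (by omega)
    rwa [Nat.add_right_comm p 1 k] at this

lemma exists_inSteps_isSplit (a : ℕ) (hm : 2 ≤ m) :
    ∃ N k J, InSteps (IntervalMove N) k (Finset.range m) J ∧ (∀ j ∈ J, j ≤ N) ∧ IsSplit a J := by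
  induction m using Nat.strong_induction_on with
  | _ m ih =>
    rcases lt_or_ge m 4 with hm4 | hm4
    · refine ⟨m, 0, Finset.range m, rfl, fun j hj => (Finset.mem_range.1 hj).le, ?_⟩
      have := (IsSplit.empty (a := a)).union_Ico (p := 0) (l := m) (by simp) (by omega)
      rwa [Finset.empty_union, zero_add, ← Finset.range_eq_Ico] at this
    -- Move the two rightmost points far away, then split the remaining interval.
    · obtain ⟨N, k, J, hsteps, hJ, hsplit⟩ := ih (m - 2) (by omega) (by omega)
      let p := m - 2 + (N + a + 1)
      have hrange : Finset.range m = Finset.range (m - 2) ∪ Finset.Ico (m - 2) (m - 2 + 2) := by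
        rw [Finset.range_eq_Ico, Finset.range_eq_Ico,
          Finset.Ico_union_Ico_eq_Ico (Nat.zero_le _) (Nat.le_add_right _ 2)]
        congr
        omega
      have hdimer : InSteps (IntervalMove (p + 1)) (N + a + 1) (Finset.range m)
          (Finset.range (m - 2) ∪ Finset.Ico p (p + 2)) := by
        rw [hrange]
        exact inSteps_intervalMove_dimer (fun i hi => Finset.mem_range.1 hi) (by omega)
      refine ⟨p + 1, N + a + 1 + k, J ∪ Finset.Ico p (p + 2), hdimer.trans ?_, fun j hj => ?_, ?_⟩
      · refine hsteps.map (· ∪ Finset.Ico p (p + 2)) fun _ _ h => h.union (by omega) fun i hi => ?_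
        have := Finset.mem_Ico.1 hi
        omega
      · rcases Finset.mem_union.1 hj with hj | hj
        · exact (hJ j hj).trans (by omega)
        · exact Nat.le_of_lt_succ (Finset.mem_Ico.1 hj).2
      · exact hsplit.union_Ico (fun j hj => by have := hJ j hj; omega) (Or.inl rfl)

lemma exists_uniform_inSteps_isSplit (a n : ℕ) : ∃ N K, ∀ m, 2 ≤ m → m ≤ n → ∃ k ≤ K, ∃ J,
    InSteps (IntervalMove N) k (Finset.range m) J ∧ (∀ j ∈ J, j ≤ N) ∧ IsSplit a J := by
  choose! N k J hsteps hJ hsplit using fun m (hm : 2 ≤ m) => exists_inSteps_isSplit a hm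
  have hle (f : ℕ → ℕ) {m : ℕ} (hm : m ≤ n) : f m ≤ (Finset.range (n + 1)).sup f :=
    Finset.le_sup (Finset.mem_range.2 (Nat.lt_succ_of_le hm))
  exact ⟨_, _, fun m hm hmn => ⟨k m, hle k hmn, J m,
    (hsteps m hm).mono fun _ _ h => h.mono (hle N hmn),
    fun j hj => (hJ m hm j hj).trans (hle N hmn), hsplit m hm⟩⟩

end Interval

section IsDOTUnion

variable {V V' A : Conf d} {a : ℕ}

/-- Unions of reference dimers and trimers at pairwise distances larger than `a`. -/
def IsDOTUnion (a : ℕ) (V : Conf d) : Prop :=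
  ∃ P : Finset (Conf d), (∀ A ∈ P, A ∈ Ref d) ∧
    (∀ A ∈ P, ∀ B ∈ P, A ≠ B → ∀ x ∈ A, ∀ y ∈ B, (a : ℝ) < dist x y) ∧ P.biUnion id = V

lemma IsDOTUnion.empty : IsDOTUnion a (∅ : Conf d) := ⟨∅, by simp, by simp, rfl⟩

lemma IsDOTUnion.of_mem_ref (hA : A ∈ Ref d) : IsDOTUnion a A := ⟨{A}, by simpa, by simp, by simp⟩

lemma IsDOTUnion.union (hV : IsDOTUnion a V) (hV' : IsDOTUnion a V')
    (hsep : ∀ x ∈ V, ∀ y ∈ V', (a : ℝ) < dist x y) : IsDOTUnion a (V ∪ V') := by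
  obtain ⟨P, hP, hPsep, rfl⟩ := hV
  obtain ⟨P', hP', hPsep', rfl⟩ := hV'
  have hsep' (A) (hA : A ∈ P) (B) (hB : B ∈ P') (x) (hx : x ∈ A) (y) (hy : y ∈ B) :
      (a : ℝ) < dist x y :=
    hsep x (Finset.mem_biUnion.2 ⟨A, hA, hx⟩) y (Finset.mem_biUnion.2 ⟨B, hB, hy⟩)
  refine ⟨P ∪ P', fun A hA => (Finset.mem_union.1 hA).elim (hP A) (hP' A), ?_,
    Finset.union_biUnion⟩
  intro A hA B hB hAB x hx y hy
  rcases Finset.mem_union.1 hA with hA | hA <;> rcases Finset.mem_union.1 hB with hB | hB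
  · exact hPsep A hA B hB hAB x hx y hy
  · exact hsep' A hA B hB x hx y hy
  · rw [dist_comm]
    exact hsep' B hB A hA y hy x hx
  · exact hPsep' A hA B hB hAB x hx y hy

lemma IsDOTUnion.biUnion {ι : Type*} {O : Finset ι} {V : ι → Conf d}
    (hV : ∀ o ∈ O, IsDOTUnion a (V o))
    (hsep : ∀ o ∈ O, ∀ o' ∈ O, o ≠ o' → ∀ x ∈ V o, ∀ y ∈ V o', (a : ℝ) < dist x y) :
    IsDOTUnion a (O.biUnion V) := by
  classical
  induction O using Finset.induction_on with
  | empty => exact IsDOTUnion.empty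
  | insert o O ho ih =>
    have hmem {o' : ι} (ho' : o' ∈ O) : o' ∈ insert o O := Finset.mem_insert_of_mem ho'
    have ho_mem : o ∈ insert o O := Finset.mem_insert_self o O
    rw [Finset.biUnion_insert]
    refine (hV o ho_mem).union (ih (fun o' ho' => hV o' (hmem ho')) fun o₁ h₁ o₂ h₂ =>
      hsep o₁ (hmem h₁) o₂ (hmem h₂)) fun x hx y hy => ?_
    obtain ⟨o', ho', hy⟩ := Finset.mem_biUnion.1 hy
    exact hsep o ho_mem o' (hmem ho') (fun h => ho (h ▸ ho')) x hx y hy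

end IsDOTUnion

/-! ### Rearranging a cluster -/

section Line

variable {v o u x : Pt d} {i i₁ i₂ : Fin d} {Q : Conf d} {I J : Finset ℕ} {a j k n r N R : ℕ}

/-- The points `v, v + e₁, v + 2e₁, …`. -/
def linePt (v : Pt d) (j : ℕ) : Pt d := v + j • e1v d

/-- The copy of `J` on the half-line that starts at `v` in direction `e₁`. -/
def line (v : Pt d) (J : Finset ℕ) : Conf d := J.image (linePt v)

lemma linePt_zero : linePt v 0 = v := by rw [linePt, zero_nsmul, add_zero]

lemma linePt_succ : linePt v (j + 1) = linePt v j + e1v d := by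
  rw [linePt, succ_nsmul, ← add_assoc, linePt]

lemma linePt_apply_first (hi : (i : ℕ) = 0) : linePt v j i = v i + j := by
  simp [linePt, e1v, hi]

lemma linePt_apply_other (hi : (i : ℕ) ≠ 0) : linePt v j i = v i := by
  simp [linePt, e1v, hi]

lemma e1v_eq_single (hi : (i : ℕ) = 0) : e1v d = Pi.single i 1 := by
  funext j
  rw [e1v, Pi.single_apply]
  exact if_congr (by rw [Fin.ext_iff, hi]) rfl rfl

lemma linePt_injective (hd : 0 < d) : Function.Injective (linePt v) := fun j k h => by
  have := congrFun h ⟨0, hd⟩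
  rw [linePt_apply_first rfl, linePt_apply_first rfl] at this
  omega

lemma dist_linePt_le (hv : dist v o ≤ r) (hj : j ≤ N) : dist (linePt v j) o ≤ (r + N : ℕ) := by
  rw [dist_le_natCast_iff] at hv ⊢
  intro i
  have := abs_le.1 (hv i)
  rw [abs_le]
  by_cases hi : (i : ℕ) = 0
  · rw [linePt_apply_first hi]
    omega
  · rw [linePt_apply_other hi]
    omega

lemma mem_line : u ∈ line v J ↔ ∃ j ∈ J, linePt v j = u := Finset.mem_image

lemma linePt_mem_line (hj : j ∈ J) : linePt v j ∈ line v J := Finset.mem_image_of_mem _ hj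

lemma line_union : line v (I ∪ J) = line v I ∪ line v J := Finset.image_union I J

lemma line_insert : line v (insert j J) = insert (linePt v j) (line v J) :=
  Finset.image_insert _ j J

lemma line_erase (hd : 0 < d) : line v (J.erase j) = (line v J).erase (linePt v j) :=
  Finset.image_erase (linePt_injective hd) J j

lemma linePt_succ_mem_outerBoundary (hi : (i : ℕ) = 0) {W : Conf d} (hmem : linePt v j ∈ W)
    (hvac : linePt v (j + 1) ∉ W) : linePt v (j + 1) ∈ outerBoundary W := by
  refine mem_outerBoundary.2 ⟨hvac, Pi.single i (-1), single_neg_one_mem_unitSteps i, ?_⟩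
  rwa [linePt_succ, e1v_eq_single hi, add_assoc, ← Pi.single_add, add_neg_cancel, Pi.single_zero,
    add_zero]

lemma IntervalMove.localMove (hd : 2 ≤ d) (hline : ∀ j ≤ N, dist (linePt v j) o ≤ R)
    (h : IntervalMove N I J) : LocalMove o R (line v I) (line v J) := by
  obtain ⟨hI, j, hj, w, hw, hwN, hvac, rfl⟩ := h
  have hd0 : 0 < d := by omega
  have hclear (K : Finset ℕ) (j : ℕ) : ClearAbove (line v K) o R ⟨1, hd⟩ (linePt v j) := by
    intro u hu _ _
    obtain ⟨l, -, rfl⟩ := mem_line.1 hu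
    rw [linePt_apply_other one_ne_zero, linePt_apply_other one_ne_zero]
  have hvac' : linePt v (w + 1) ∉ line v (I.erase j) := fun hmem => by
    obtain ⟨l, hl, hlw⟩ := mem_line.1 hmem
    exact hvac (linePt_injective hd0 hlw ▸ hl)
  refine ⟨fun u hu => ?_, linePt v j, linePt_mem_line hj, linePt v (w + 1), ?_,
    hline _ hwN, ⟨⟨1, hd⟩, hclear I j, ?_⟩, ?_⟩
  · obtain ⟨l, hl, rfl⟩ := mem_line.1 hu
    exact hline l (hI l hl)
  · rw [← line_erase hd0]
    exact linePt_succ_mem_outerBoundary (i := ⟨0, hd0⟩) rfl (linePt_mem_line hw) hvac'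
  · rw [← line_erase hd0]
    exact hclear _ _
  · rw [line_insert, line_erase hd0]

lemma line_Ico_mem_ref {p l : ℕ} (hl : l = 2 ∨ l = 3) : line v (Finset.Ico p (p + l)) ∈ Ref d := by
  refine ⟨linePt v p, hl.imp ?_ ?_⟩
  · rintro rfl
    rw [← linePt_succ, show Finset.Ico p (p + 2) = {p, p + 1} by ext; simp; omega, line_insert]
    rfl
  · rintro rfl
    rw [← linePt_succ, ← linePt_succ, line, show Finset.Ico p (p + 3) = {p, p + 1, p + 2} by
      ext; simp; omega, Finset.image_insert, Finset.image_insert, Finset.image_singleton]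

lemma lt_dist_linePt (hd : 0 < d) (h : j + a < k) : (a : ℝ) < dist (linePt v j) (linePt v k) := by
  by_contra! hle
  have := (abs_le.1 (dist_le_natCast_iff.1 hle ⟨0, hd⟩)).1
  rw [linePt_apply_first rfl, linePt_apply_first rfl] at this
  omega

lemma IsSplit.isDOTUnion_line (hd : 0 < d) (h : IsSplit a J) : IsDOTUnion a (line v J) := by
  induction h with
  | empty => exact IsDOTUnion.empty
  | union_Ico _ hgap hl ih =>
    rw [line_union]
    refine ih.union (IsDOTUnion.of_mem_ref (line_Ico_mem_ref hl)) fun x hx y hy => ?_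
    obtain ⟨j, hj, rfl⟩ := mem_line.1 hx
    obtain ⟨k, hk, rfl⟩ := mem_line.1 hy
    exact lt_dist_linePt hd ((hgap j hj).trans_le (Finset.mem_Ico.1 hk).1)

/-- `u ≠ v` does not obstruct the half-line from `v` in direction `e_{i₁} = e₁`, and if it lies
in the hyperplane through `v` orthogonal to it, it is not below `v` in direction `i₂`. -/
def Behind (i₁ i₂ : Fin d) (v u : Pt d) : Prop :=
  u ≠ v ∧ u i₁ ≤ v i₁ ∧ (u i₁ = v i₁ → v i₂ ≤ u i₂)

lemma Behind.notMem_line (hi₁ : (i₁ : ℕ) = 0) (h : Behind i₁ i₂ v u) : u ∉ line v J := by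
  intro hu
  obtain ⟨j, -, rfl⟩ := mem_line.1 hu
  have hj := h.2.1
  rw [linePt_apply_first hi₁] at hj
  obtain rfl : j = 0 := by omega
  exact h.1 linePt_zero

lemma exists_forall_behind (i₁ i₂ : Fin d) (hQ : Q.Nonempty) :
    ∃ v ∈ Q, ∀ u ∈ Q.erase v, Behind i₁ i₂ v u := by
  obtain ⟨w, hw, hwmax⟩ := Q.exists_max_image (· i₁) hQ
  obtain ⟨v, hv, hvmin⟩ := (Q.filter (· i₁ = w i₁)).exists_min_image (· i₂)
    ⟨w, Finset.mem_filter.2 ⟨hw, rfl⟩⟩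
  obtain ⟨hvQ, hvw⟩ := Finset.mem_filter.1 hv
  refine ⟨v, hvQ, fun u hu => ⟨Finset.ne_of_mem_erase hu, ?_, fun huv => ?_⟩⟩
  · exact (hwmax u (Finset.mem_of_mem_erase hu)).trans_eq hvw.symm
  · exact hvmin u (Finset.mem_filter.2 ⟨Finset.mem_of_mem_erase hu, huv.trans hvw⟩)

lemma localMove_gather (hi₁ : (i₁ : ℕ) = 0) (hi₂ : (i₂ : ℕ) ≠ 0)
    (hQ : ∀ u ∈ Q, dist u o ≤ R ∧ Behind i₁ i₂ v u) (hline : ∀ j ≤ k + 1, dist (linePt v j) o ≤ R)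
    (hx : x ∈ Q) (hmax : ∀ u ∈ Q, u i₂ ≤ x i₂) :
    LocalMove o R (Q ∪ line v (Finset.range (k + 1)))
      (Q.erase x ∪ line v (Finset.range (k + 1 + 1))) := by
  have hne : i₁ ≠ i₂ := fun h => hi₂ (h ▸ hi₁)
  have herase : (Q ∪ line v (Finset.range (k + 1))).erase x =
      Q.erase x ∪ line v (Finset.range (k + 1)) := by
    rw [Finset.erase_union_distrib, Finset.erase_eq_of_notMem ((hQ x hx).2.notMem_line hi₁)]
  have hlt (u : Pt d) (hu : u ∈ Q.erase x ∪ line v (Finset.range (k + 1))) :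
      u i₁ < linePt v (k + 1) i₁ := by
    rw [linePt_apply_first hi₁]
    rcases Finset.mem_union.1 hu with hu | hu
    · have := (hQ u (Finset.mem_of_mem_erase hu)).2.2.1
      omega
    · obtain ⟨j, hj, rfl⟩ := mem_line.1 hu
      rw [linePt_apply_first hi₁]
      have := Finset.mem_range.1 hj
      omega
  refine ⟨fun u hu => ?_, x, Finset.mem_union_left _ hx, linePt v (k + 1), ?_, hline _ le_rfl,
    ⟨i₂, fun u hu _ hcol => ?_, fun u hu _ hcol => ?_⟩, ?_⟩
  · rcases Finset.mem_union.1 hu with hu | hu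
    · exact (hQ u hu).1
    · obtain ⟨j, hj, rfl⟩ := mem_line.1 hu
      exact hline j (Finset.mem_range.1 hj).le
  · rw [herase]
    refine linePt_succ_mem_outerBoundary hi₁ (Finset.mem_union_right _ (linePt_mem_line ?_))
      fun hmem => (hlt _ hmem).ne rfl
    exact Finset.self_mem_range_succ k
  · rcases Finset.mem_union.1 hu with hu | hu
    · exact hmax u hu
    · obtain ⟨j, -, rfl⟩ := mem_line.1 hu
      have := (hQ x hx).2
      have hj := hcol i₁ hne
      rw [linePt_apply_first hi₁] at hj
      rw [linePt_apply_other hi₂]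
      exact this.2.2 (by have := this.2.1; omega)
  · rw [herase] at hu
    exact absurd (hcol i₁ hne) (hlt u hu).ne
  · rw [herase, Finset.range_add_one (n := k + 1), line_insert, Finset.union_insert]

lemma inSteps_gather (hi₁ : (i₁ : ℕ) = 0) (hi₂ : (i₂ : ℕ) ≠ 0)
    (hQ : ∀ u ∈ Q, dist u o ≤ R ∧ Behind i₁ i₂ v u)
    (hline : ∀ j ≤ k + Q.card, dist (linePt v j) o ≤ R) :
    InSteps (LocalMove o R) Q.card (Q ∪ line v (Finset.range (k + 1)))
      (line v (Finset.range (k + Q.card + 1))) := by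
  induction hq : Q.card generalizing Q k with
  | zero =>
    rw [Finset.card_eq_zero.1 hq, Finset.empty_union]
    rfl
  | succ q ih =>
    obtain ⟨x, hx, hmax⟩ := Q.exists_max_image (· i₂) (Finset.card_pos.1 (by omega))
    have hcard : (Q.erase x).card = q := by rw [Finset.card_erase_of_mem hx, hq, Nat.add_sub_cancel]
    refine ⟨_, localMove_gather hi₁ hi₂ hQ (fun j hj => hline j (by omega)) hx hmax, ?_⟩
    have := ih (Q := Q.erase x) (k := k + 1) (fun u hu => hQ u (Finset.mem_of_mem_erase hu))
      (fun j hj => hline j (by omega)) hcard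
    rwa [show k + 1 + q = k + (q + 1) by omega] at this

lemma exists_inSteps_line (hd : 2 ≤ d) (hQ : Q.Nonempty) (hr : ∀ u ∈ Q, dist u o ≤ r)
    (hR : r + Q.card ≤ R) : ∃ v, dist v o ≤ r ∧
      InSteps (LocalMove o R) (Q.card - 1) Q (line v (Finset.range Q.card)) := by
  obtain ⟨v, hv, hbehind⟩ := exists_forall_behind ⟨0, by omega⟩ ⟨1, hd⟩ hQ
  have hcard : (Q.erase v).card = Q.card - 1 := Finset.card_erase_of_mem hv
  have hpos := hQ.card_pos
  have hgather := inSteps_gather (o := o) (R := R) (k := 0) rfl one_ne_zero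
    (fun u hu => ⟨(hr u (Finset.mem_of_mem_erase hu)).trans (Nat.cast_le.2 (by omega)),
      hbehind u hu⟩)
    fun j hj => (dist_linePt_le (hr v hv) hj).trans (Nat.cast_le.2 (by omega))
  rw [hcard, zero_add, zero_add, Nat.sub_add_cancel hpos, Finset.range_one, line,
    Finset.image_singleton, linePt_zero, Finset.union_comm, ← Finset.insert_eq,
    Finset.insert_erase hv] at hgather
  exact ⟨v, hr v hv, hgather⟩

lemma exists_inSteps_isDOTUnion (hd : 2 ≤ d) (a n r : ℕ) : ∃ R K, r ≤ R ∧
    ∀ (o : Pt d) (Q : Conf d), 2 ≤ Q.card → Q.card ≤ n → (∀ u ∈ Q, dist u o ≤ r) →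
      ∃ V, ∃ k ≤ K, IsDOTUnion a V ∧ (∀ u ∈ V, dist u o ≤ R) ∧ InSteps (LocalMove o R) k Q V := by
  obtain ⟨N, K, hsplit⟩ := exists_uniform_inSteps_isSplit a n
  refine ⟨r + (n + N), n + K, Nat.le_add_right r _, fun o Q hQ2 hQn hQr => ?_⟩
  obtain ⟨v, hv, hgather⟩ := exists_inSteps_line hd (Finset.card_pos.1 (by omega)) hQr
    (R := r + (n + N)) (by omega)
  obtain ⟨k, hk, J, hsteps, hJ, hJsplit⟩ := hsplit Q.card hQ2 hQn
  have hline (j : ℕ) (hj : j ≤ N) : dist (linePt v j) o ≤ (r + (n + N) : ℕ) :=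
    dist_linePt_le hv (hj.trans (Nat.le_add_left N n))
  refine ⟨line v J, Q.card - 1 + k, by omega, hJsplit.isDOTUnion_line (by omega), fun u hu => ?_,
    hgather.trans (hsteps.map (line v) fun _ _ h => h.localMove hd hline)⟩
  obtain ⟨j, hj, rfl⟩ := mem_line.1 hu
  exact hline j (hJ j hj)

end Line

/-! ### Clusters -/

section Clusters

variable {O U B : Conf d} {o : Pt d} {a n r R N : ℕ}

lemma exists_forall_mem_of_mem_succ {α : Type*} (s : Finset α) {A : ℕ → Set α} (hA : Monotone A) :
    ∃ j ≤ s.card, ∀ x ∈ s, x ∈ A (j + 1) → x ∈ A j := by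
  classical
  by_contra! h
  have hgrow (j : ℕ) (hj : j ≤ s.card + 1) : j ≤ {x ∈ s | x ∈ A j}.card := by
    induction j with
    | zero => exact Nat.zero_le _
    | succ j ih =>
      obtain ⟨x, hx, hxA, hxA'⟩ := h j (by omega)
      refine (Nat.succ_le_succ (ih (by omega))).trans (Finset.card_lt_card ?_)
      refine Finset.ssubset_iff_subset_ne.2
        ⟨Finset.monotone_filter_right s fun y _ hy => hA j.le_succ hy, fun heq => hxA' ?_⟩
      exact (Finset.mem_filter.1 (heq ▸ Finset.mem_filter.2 ⟨hx, hxA⟩)).2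
  exact (hgrow _ le_rfl).not_gt (Nat.lt_succ_of_le (Finset.card_filter_le _ _))

/-- There are only `n²` pairs of points, so among `n² + 1` disjoint ranges of distances one is not
attained. -/
lemma exists_dist_gap {α : Type*} [PseudoMetricSpace α] (U : Finset α) {ρ : ℕ → ℕ}
    (hρ : Monotone ρ) : ∃ j ≤ U.card * U.card,
      ∀ u ∈ U, ∀ u' ∈ U, dist u u' ≤ ρ (j + 1) → dist u u' ≤ ρ j := by
  obtain ⟨j, hj, h⟩ := exists_forall_mem_of_mem_succ (U ×ˢ U)
    (A := fun j => {p | dist p.1 p.2 ≤ ρ j}) fun i j hij p hp =>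
      le_trans (show dist p.1 p.2 ≤ ρ i from hp) (Nat.cast_le.2 (hρ hij))
  exact ⟨j, hj.trans_eq (Finset.card_product U U), fun u hu u' hu' =>
    h (u, u') (Finset.mk_mem_product hu hu')⟩

/-- `U` is covered by the balls of radius `r` around the points of `O`, which have pairwise
distances larger than `R`. -/
def IsClusterCover (O : Conf d) (r R : ℕ) (U : Conf d) : Prop :=
  (∀ u ∈ U, ∃ o ∈ O, dist u o ≤ r) ∧ ∀ o ∈ O, ∀ o' ∈ O, o ≠ o' → (R : ℝ) < dist o o'

/-- The centers form a maximal `R`-separated subset of `U`. -/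
lemma exists_isClusterCover (hgap : ∀ u ∈ U, ∀ u' ∈ U, dist u u' ≤ R → dist u u' ≤ r) :
    ∃ O ⊆ U, IsClusterCover O r R U := by
  classical
  obtain ⟨O, hO, hmax⟩ := Finset.exists_max_image
    {O ∈ U.powerset | ∀ o ∈ O, ∀ o' ∈ O, o ≠ o' → (R : ℝ) < dist o o'} Finset.card
    ⟨∅, by simp⟩
  simp only [Finset.mem_filter, Finset.mem_powerset] at hO hmax
  refine ⟨O, hO.1, fun u hu => ?_, hO.2⟩
  by_contra! hfar
  have hfarR (o : Pt d) (ho : o ∈ O) : (R : ℝ) < dist u o :=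
    lt_of_not_ge fun h => (hfar o ho).not_ge (hgap u hu o (hO.1 ho) h)
  have huO : u ∉ O := fun h => (hfar u h).not_ge (by simp)
  have hle := hmax (insert u O) ⟨Finset.insert_subset hu hO.1, fun o ho o' ho' hne => ?_⟩
  · rw [Finset.card_insert_of_notMem huO] at hle
    omega
  · rcases Finset.mem_insert.1 ho with rfl | h <;> rcases Finset.mem_insert.1 ho' with rfl | h'
    · exact absurd rfl hne
    · exact hfarR o' h'
    · exact dist_comm o o' ▸ hfarR o h
    · exact hO.2 o h o' h' hne

lemma IsClusterCover.erase {U' : Conf d} {r' : ℕ} (hU : IsClusterCover O r R U)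
    (hU' : ∀ u ∈ U', ∃ o' ∈ O.erase o, dist u o' ≤ r') : IsClusterCover (O.erase o) r' R U' :=
  ⟨hU', fun _ h₁ _ h₂ => hU.2 _ (Finset.mem_of_mem_erase h₁) _ (Finset.mem_of_mem_erase h₂)⟩

/-- A point alone in its cluster moves next to another cluster. -/
lemma IsClusterCover.exists_erase (hd : 5 ≤ d) (hn : 2 ≤ U.card) (hU : IsClusterCover O r R U)
    (hR : 2 * r + 8 * U.card ≤ R) (ho : o ∈ O) (hcard : {u ∈ U | dist u o ≤ r}.card < 2) :
    ∃ k ≤ 1, ∃ U', InSteps (HATStep (isolatedBound d U.card)) k U U' ∧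
      IsClusterCover (O.erase o) (r + 1) R U' := by
  have hother (u : Pt d) (hu : u ∈ U) (huo : ¬ dist u o ≤ r) : ∃ o' ∈ O.erase o, dist u o' ≤ r :=
    let ⟨o', ho', huo'⟩ := hU.1 u hu
    ⟨o', Finset.mem_erase.2 ⟨fun h => huo (h ▸ huo'), ho'⟩, huo'⟩
  by_cases hne : ∃ x ∈ U, dist x o ≤ r
  · obtain ⟨x, hx, hxo⟩ := hne
    have halone (u : Pt d) (hu : u ∈ U.erase x) : ∃ o' ∈ O.erase o, dist u o' ≤ r := by
      obtain ⟨hux, hu⟩ := Finset.mem_erase.1 hu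
      exact hother u hu fun huo => hux (Finset.card_le_one.1 (Nat.le_of_lt_succ hcard) u
        (Finset.mem_filter.2 ⟨hu, huo⟩) x (Finset.mem_filter.2 ⟨hx, hxo⟩))
    have hann : EmptyAnnulus U x 0 (8 * U.card) := fun u hu hux => by
      by_contra hne
      obtain ⟨o', ho', huo'⟩ := halone u
        (Finset.mem_erase.2 ⟨fun h => hne (by simp [h]), hu⟩)
      obtain ⟨hoo', ho'⟩ := Finset.mem_erase.1 ho'
      have hsep := hU.2 o' ho' o ho hoo'
      have htri := dist_triangle4_left u x o' o
      have hR' : ((2 * r + 8 * U.card : ℕ) : ℝ) ≤ R := Nat.cast_le.2 hR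
      push_cast at *
      linarith
    obtain ⟨y, hy, hstep⟩ := exists_hatStep_of_isolated hd hn hx hann
    refine ⟨1, le_rfl, _, .single hstep, hU.erase fun u hu => ?_⟩
    rcases Finset.mem_insert.1 hu with rfl | hu
    · obtain ⟨w, hw, huw⟩ := exists_dist_le_one_of_mem_outerBoundary hy
      obtain ⟨o', ho', hwo'⟩ := halone w hw
      exact ⟨o', ho', by push_cast; linarith [dist_triangle u w o']⟩
    · exact (halone u hu).imp fun o' h => ⟨h.1, h.2.trans (Nat.cast_le.2 r.le_succ)⟩
  · push Not at hne
    exact ⟨0, zero_le_one, U, rfl, hU.erase fun u hu =>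
      (hother u hu (hne u hu).not_ge).imp fun o' h => ⟨h.1, h.2.trans (Nat.cast_le.2 r.le_succ)⟩⟩

lemma InSteps.card_eq {c : ℝ} {k : ℕ} {V : Conf d} (h : InSteps (HATStep c) k U V) :
    V.card = U.card := h.eq_of_invariant Finset.card fun _ _ h => h.1

lemma IsClusterCover.exists_two_le_card (hd : 5 ≤ d) (hn : 2 ≤ U.card)
    (hU : IsClusterCover O r R U) (hO : O.card ≤ N) (hR : 2 * (r + N) + 8 * U.card ≤ R) :
    ∃ k ≤ N, ∃ U' O', InSteps (HATStep (isolatedBound d U.card)) k U U' ∧ O'.card ≤ N ∧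
      IsClusterCover O' (r + N) R U' ∧ ∀ o ∈ O', 2 ≤ {u ∈ U' | dist u o ≤ (r + N : ℕ)}.card := by
  induction N generalizing O U r with
  | zero =>
    obtain rfl : O = ∅ := Finset.card_eq_zero.1 (Nat.le_zero.1 hO)
    exact ⟨0, le_rfl, U, ∅, rfl, le_rfl, hU, by simp⟩
  | succ N ih =>
    have hr : ((r : ℕ) : ℝ) ≤ (r + (N + 1) : ℕ) := Nat.cast_le.2 (Nat.le_add_right _ _)
    by_cases h : ∀ o ∈ O, 2 ≤ {u ∈ U | dist u o ≤ r}.card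
    · refine ⟨0, Nat.zero_le _, U, O, rfl, hO,
        ⟨fun u hu => (hU.1 u hu).imp fun o h => ⟨h.1, h.2.trans hr⟩, hU.2⟩, fun o ho => ?_⟩
      exact (h o ho).trans (Finset.card_le_card
        (Finset.monotone_filter_right U fun u _ hu => hu.trans hr))
    · push Not at h
      obtain ⟨o, ho, hcard⟩ := h
      obtain ⟨k, hk, U₁, hsteps, hU₁⟩ := hU.exists_erase hd hn (by omega) ho hcard
      have hO₁ : (O.erase o).card ≤ N := by rw [Finset.card_erase_of_mem ho]; omega
      obtain ⟨l, hl, U', O', hsteps', hO', hU', htwo⟩ := ih (hsteps.card_eq ▸ hn) hU₁ hO₁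
        (by rw [hsteps.card_eq]; omega)
      rw [hsteps.card_eq] at hsteps'
      rw [Nat.add_right_comm, Nat.add_assoc] at hU' htwo
      exact ⟨k + l, by omega, U', O', hsteps.trans hsteps', hO'.trans N.le_succ, hU', htwo⟩

/-- Far apart clusters are rearranged one after the other, in the presence of a set `B` that stays
unchanged. -/
lemma inSteps_biUnion_union (hd : 5 ≤ d) {W V : Pt d → Conf d} {k : Pt d → ℕ}
    (hR : 2 * r + 8 * n ≤ R) (hO : ∀ o ∈ O, ∀ o' ∈ O, o ≠ o' → (R : ℝ) < dist o o')
    (hW : ∀ o ∈ O, ∀ u ∈ W o, dist u o ≤ r) (hV : ∀ o ∈ O, ∀ u ∈ V o, dist u o ≤ r)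
    (hsteps : ∀ o ∈ O, InSteps (LocalMove o r) (k o) (W o) (V o))
    (hB : ∀ o ∈ O, ∀ b ∈ B, (r + 8 * n : ℕ) < dist b o) (hcard : (O.biUnion W ∪ B).card = n) :
    InSteps (HATStep (moveBound d n (moveLength d n r))) (∑ o ∈ O, k o)
      (O.biUnion W ∪ B) (O.biUnion V ∪ B) := by
  induction O using Finset.induction_on generalizing B with
  | empty => simpa using InSteps.refl _ B
  | insert o O ho ih =>
    simp only [Finset.forall_mem_insert] at hO hW hV hsteps hB
    have hfar {o' o'' u : Pt d} (hoo' : (R : ℝ) < dist o' o'') (hu : dist u o' ≤ r) :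
        (r + 8 * n : ℕ) < dist u o'' := by
      have hR' : ((2 * r + 8 * n : ℕ) : ℝ) ≤ R := Nat.cast_le.2 hR
      have htri := dist_triangle_left o' o'' u
      push_cast at *
      linarith
    have hne {o' : Pt d} (ho' : o' ∈ O) : o ≠ o' := fun h => ho (h ▸ ho')
    rw [Finset.biUnion_insert, Finset.union_assoc] at hcard ⊢
    have hfirst := inSteps_hatStep_of_localMove hd (B := O.biUnion W ∪ B) (fun b hb => ?_) hcard
      hsteps.1
    · have hcard' := hfirst.card_eq.trans hcard
      rw [Finset.union_left_comm (V o)] at hfirst hcard'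
      rw [Finset.sum_insert ho, Finset.biUnion_insert, Finset.union_assoc,
        Finset.union_left_comm (V o)]
      refine hfirst.trans (ih (fun o₁ h₁ => (hO.2 o₁ h₁).2) hW.2 hV.2 hsteps.2
        (fun o' ho' b hb => ?_) hcard')
      exact (Finset.mem_union.1 hb).elim
        (fun hb => hfar (hO.1.2 o' ho' (hne ho')) (hV.1 b hb)) (hB.2 o' ho' b)
    · rcases Finset.mem_union.1 hb with hb | hb
      · obtain ⟨o', ho', hb⟩ := Finset.mem_biUnion.1 hb
        exact hfar ((hO.2 o' ho').1 (hne ho').symm) (hW.2 o' ho' b hb)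
      · exact hB.1 b hb

lemma exists_inSteps_isDOTUnion_of_two_le_card (hd : 5 ≤ d) (a n r : ℕ) :
    ∃ r' R K, 2 * r + 8 * n ≤ R ∧
    ∀ O U : Conf d, U.card = n → IsClusterCover O r R U →
      (∀ o ∈ O, 2 ≤ {u ∈ U | dist u o ≤ r}.card) → ∃ k ≤ O.card * K, ∃ V, IsDOTUnion a V ∧
        InSteps (HATStep (moveBound d n (moveLength d n r'))) k U V := by
  obtain ⟨r', K, hr, hcluster⟩ := exists_inSteps_isDOTUnion (d := d) (by omega) a n r
  refine ⟨r', 2 * r' + 8 * n + a, K, by omega, fun O U hn hU htwo => ?_⟩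
  have hcluster' (o : Pt d) (ho : o ∈ O) := hcluster o {u ∈ U | dist u o ≤ r} (htwo o ho)
    (hn ▸ Finset.card_filter_le _ _) fun u hu => (Finset.mem_filter.1 hu).2
  choose! V k hk hunion hVr hsteps using hcluster'
  have hcover : O.biUnion (fun o => {u ∈ U | dist u o ≤ r}) = U := by
    ext u
    simp only [Finset.mem_biUnion, Finset.mem_filter]
    exact ⟨fun ⟨_, _, hu, _⟩ => hu, fun hu => (hU.1 u hu).imp fun o h => ⟨h.1, hu, h.2⟩⟩
  have hall := inSteps_biUnion_union (B := ∅) hd (Nat.le_add_right _ a) hU.2 (fun _ _ u hu =>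
    (Finset.mem_filter.1 hu).2.trans (Nat.cast_le.2 hr)) hVr hsteps (by simp) (by simpa [hcover])
  rw [hcover, Finset.union_empty, Finset.union_empty] at hall
  refine ⟨∑ o ∈ O, k o, Finset.sum_le_card_nsmul _ _ _ hk, O.biUnion V,
    IsDOTUnion.biUnion hunion fun o ho o' ho' hne x hx y hy => ?_, hall⟩
  have hsep := hU.2 o ho o' ho' hne
  have hxo := hVr o ho x hx
  have hyo := hVr o' ho' y hy
  have htri := dist_triangle4_left x y o o'
  push_cast at hsep
  have : (0 : ℝ) ≤ 8 * n := by positivity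
  linarith

lemma exists_inSteps_isDOTUnion_of_gap (hd : 5 ≤ d) (hn : 2 ≤ n) (a r : ℕ) : ∃ R K, ∃ c > 0, r ≤ R ∧
    ∀ U : Conf d, U.card = n → (∀ u ∈ U, ∀ u' ∈ U, dist u u' ≤ R → dist u u' ≤ r) →
      ∃ k ≤ K, ∃ V, IsDOTUnion a V ∧ InSteps (HATStep c) k U V := by
  obtain ⟨r', R, K, hR, hunion⟩ := exists_inSteps_isDOTUnion_of_two_le_card hd a n (r + n)
  refine ⟨R, n + n * K, min (isolatedBound d n) (moveBound d n (moveLength d n r')),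
    lt_min (isolatedBound_pos (by omega) (by omega)) (moveBound_pos (by omega) (by omega) _),
    by omega, fun U hU hgap => ?_⟩
  obtain ⟨O, hOU, hO⟩ := exists_isClusterCover hgap
  obtain ⟨k, hk, U', O', hsteps, hO', hU', htwo⟩ := hO.exists_two_le_card hd (hU.symm ▸ hn)
    (hU ▸ Finset.card_le_card hOU) (hU.symm ▸ hR)
  obtain ⟨l, hl, V, hV, hsteps'⟩ := hunion O' U' (hsteps.card_eq.trans hU) hU' htwo
  rw [hU] at hsteps
  exact ⟨k + l, Nat.add_le_add hk (hl.trans (Nat.mul_le_mul_right K hO')), V, hV,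
    (hsteps.mono fun _ _ => HATStep.mono (min_le_left _ _)).trans
      (hsteps'.mono fun _ _ => HATStep.mono (min_le_right _ _))⟩

lemma exists_inSteps_hatStep_isDOTUnion (hd : 5 ≤ d) (hn : 2 ≤ n) (a : ℕ) : ∃ K, ∃ c > 0,
    ∀ U : Conf d, U.card = n → ∃ k ≤ K, ∃ V, IsDOTUnion a V ∧ InSteps (HATStep c) k U V := by
  choose F K c hc hF hunion using exists_inSteps_isDOTUnion_of_gap hd hn a
  let ρ (j : ℕ) : ℕ := F^[j] 0
  have hρ_succ (j : ℕ) : ρ (j + 1) = F (ρ j) := Function.iterate_succ_apply' F j 0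
  have hρ : Monotone ρ := monotone_nat_of_le_succ fun j => hρ_succ j ▸ hF (ρ j)
  let scales := Finset.range (n * n + 1)
  obtain ⟨i, -, hi⟩ := scales.exists_min_image (fun j => c (ρ j)) Finset.nonempty_range_add_one
  refine ⟨∑ j ∈ scales, K (ρ j), c (ρ i), hc _, fun U hU => ?_⟩
  obtain ⟨j, hj, hgap⟩ := exists_dist_gap U hρ
  have hj : j ∈ scales := Finset.mem_range_succ_iff.2 (hU ▸ hj)
  obtain ⟨k, hk, V, hV, hsteps⟩ := hunion (ρ j) U hU (hρ_succ j ▸ hgap)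
  exact ⟨k, hk.trans (Finset.single_le_sum (f := fun j => K (ρ j)) (fun _ _ => Nat.zero_le _) hj),
    V, hV, hsteps.mono fun _ _ => HATStep.mono (hi j hj)⟩

end Clusters

/-! ### Dimer-or-trimer configurations -/

section DOT

variable {A B V : Conf d} {v x y : Pt d} {a j k : ℕ}

lemma exists_line_of_mem_ref (hA : A ∈ Ref d) :
    ∃ v, ∃ l, (l = 2 ∨ l = 3) ∧ line v (Finset.range l) = A := by
  obtain ⟨v, rfl | rfl⟩ := hA
  · refine ⟨v, 2, Or.inl rfl, ?_⟩
    rw [show Finset.range 2 = {0, 1} from rfl, line_insert, line, Finset.image_singleton,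
      linePt_succ, linePt_zero]
  · refine ⟨v, 3, Or.inr rfl, ?_⟩
    rw [show Finset.range 3 = {0, 1, 2} from rfl, line_insert, line_insert, line,
      Finset.image_singleton, linePt_succ, linePt_succ, linePt_succ, linePt_zero]

lemma card_of_mem_ref (hd : 0 < d) (hA : A ∈ Ref d) : A.card = 2 ∨ A.card = 3 := by
  obtain ⟨v, l, hl, rfl⟩ := exists_line_of_mem_ref hA
  rwa [line, Finset.card_image_of_injective _ (linePt_injective hd), Finset.card_range]

/-- The second point of the dimer or trimer is moved and returns to its place. -/
lemma exists_localMove_self (hd : 2 ≤ d) (hA : A ∈ Ref d) : ∃ o ∈ A, LocalMove o 2 A A := by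
  obtain ⟨v, l, hl, rfl⟩ := exists_line_of_mem_ref hA
  have h1 : 1 ∈ Finset.range l := Finset.mem_range.2 (by omega)
  have hmove : IntervalMove 2 (Finset.range l) (Finset.range l) :=
    ⟨fun i hi => by have := Finset.mem_range.1 hi; omega, 1, h1, 0, by simp; omega,
      by simp, by simp, (Finset.insert_erase h1).symm⟩
  refine ⟨linePt v 0, linePt_mem_line (Finset.mem_range.2 (by omega)), hmove.localMove hd ?_⟩
  intro j hj
  rw [linePt_zero, ← Nat.zero_add 2]
  exact dist_linePt_le (by simp) hj

lemma IsDOTUnion.hatStep_self (hd : 5 ≤ d) (hV : IsDOTUnion a V) (hne : V.Nonempty)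
    (ha : 2 + 8 * V.card ≤ a) : HATStep (moveBound d V.card (moveLength d V.card 2)) V V := by
  obtain ⟨P, hP, hsep, hPV⟩ := hV
  obtain ⟨u, hu⟩ := hne
  obtain ⟨A, hA, -⟩ := Finset.mem_biUnion.1 (hPV.symm ▸ hu)
  obtain ⟨o, ho, hmove⟩ := exists_localMove_self (by omega) (hP A hA)
  have hAV : A ∪ V \ A = V :=
    Finset.union_sdiff_of_subset (hPV ▸ Finset.subset_biUnion_of_mem id hA)
  have hstep := hmove.hatStep (B := V \ A) (n := V.card) hd (fun b hb => ?_) (by rw [hAV])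
  · rwa [hAV] at hstep
  · obtain ⟨hbV, hbA⟩ := Finset.mem_sdiff.1 hb
    obtain ⟨B, hB, hbB⟩ := Finset.mem_biUnion.1 (hPV.symm ▸ hbV)
    exact (Nat.cast_le.2 ha).trans_lt (hsep B hB A hA (fun h => hbA (h ▸ hbB)) b hbB o ho)

lemma dist_le_dist0 (x y : Pt d) : dist x y ≤ dist0 d x y := by
  refine (dist_pi_le_iff (Real.sqrt_nonneg _)).2 fun i => ?_
  rw [Int.dist_eq]
  exact Real.abs_le_sqrt (Finset.single_le_sum (f := fun i => ((x i : ℝ) - y i) ^ 2)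
    (fun _ _ => sq_nonneg _) (Finset.mem_univ i))

lemma dist0_linePt (hd : 0 < d) : dist0 d (linePt v j) (linePt v k) = |(j : ℝ) - k| := by
  rw [dist0, Finset.sum_eq_single ⟨0, hd⟩ (fun i _ hi => ?_) (by simp), ← Real.sqrt_sq_eq_abs]
  · simp [linePt_apply_first]
  · have hi : (i : ℕ) ≠ 0 := fun h => hi (Fin.ext h)
    simp [linePt_apply_other hi]

lemma diam0_le_two (hd : 0 < d) (hA : A ∈ Ref d) : diam0 d A ≤ 2 := by
  obtain ⟨v, l, hl, rfl⟩ := exists_line_of_mem_ref hA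
  refine Real.sSup_le ?_ zero_le_two
  rintro r ⟨x, hx, y, hy, rfl⟩
  obtain ⟨j, hj, rfl⟩ := mem_line.1 hx
  obtain ⟨k, hk, rfl⟩ := mem_line.1 hy
  have hj2 : (j : ℝ) ≤ 2 := by exact_mod_cast (by have := Finset.mem_range.1 hj; omega : j ≤ 2)
  have hk2 : (k : ℝ) ≤ 2 := by exact_mod_cast (by have := Finset.mem_range.1 hk; omega : k ≤ 2)
  rw [dist0_linePt hd]
  exact abs_sub_le_of_nonneg_of_le j.cast_nonneg hj2 k.cast_nonneg hk2

lemma le_setDist {r : ℝ} (hA : A.Nonempty) (hB : B.Nonempty)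
    (h : ∀ x ∈ A, ∀ y ∈ B, r ≤ dist x y) : r ≤ setDist d A B := by
  obtain ⟨x, hx⟩ := hA
  obtain ⟨y, hy⟩ := hB
  refine le_csInf ⟨_, x, hx, y, hy, rfl⟩ ?_
  rintro _ ⟨x, hx, y, hy, rfl⟩
  exact (h x hx y hy).trans (dist_le_dist0 x y)

lemma mem_others {C : Fin k → Conf d} {i : Fin k} : y ∈ others d C i ↔ ∃ j ≠ i, y ∈ C j := by
  simp only [others, Finset.mem_biUnion, Finset.mem_univ, true_and]
  refine exists_congr fun j => ?_
  split_ifs with h <;> simp [h]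

lemma two_le_log {r : ℝ} (hr : 8 ≤ r) : 2 ≤ Real.log r := by
  rw [Real.le_log_iff_exp_le (by linarith)]
  calc Real.exp 2 = Real.exp 1 * Real.exp 1 := by rw [← Real.exp_add]; norm_num
    _ ≤ 2.7182818286 * 2.7182818286 := by gcongr <;> exact Real.exp_one_lt_d9.le
    _ ≤ r := by linarith

lemma isDOT_of_mem_ref (hd : 0 < d) (hk : 0 < k) {C : Fin k → Conf d} (hC : ∀ i, C i ∈ Ref d)
    (hsep : ∀ i, (a : ℝ) ≤ setDist d (C i) (others d C i)) (ha : 8 ≤ a) : IsDOT d C a 1 := by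
  have : Nonempty (Fin k) := ⟨⟨0, hk⟩⟩
  refine ⟨fun i => card_of_mem_ref hd (hC i), le_ciInf hsep, fun i => ?_⟩
  rw [one_mul]
  exact (diam0_le_two hd (hC i)).trans (two_le_log (le_trans (by exact_mod_cast ha) (hsep i)))

lemma IsDOTUnion.inU (hd : 0 < d) (hV : IsDOTUnion a V) (hcard : 4 ≤ V.card) (ha : 8 ≤ a) :
    InU d V.card a 1 V := by
  obtain ⟨P, hP, hsep, rfl⟩ := hV
  let C (i : Fin P.card) : Conf d := P.equivFin.symm i
  have hCP (i) : C i ∈ P := (P.equivFin.symm i).2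
  have hC_inj : Function.Injective C := Subtype.val_injective.comp P.equivFin.symm.injective
  have hC_union : Finset.univ.biUnion C = P.biUnion id := by
    ext u
    simp only [Finset.mem_biUnion, Finset.mem_univ, true_and, id]
    exact ⟨fun ⟨i, hi⟩ => ⟨C i, hCP i, hi⟩, fun ⟨A, hA, hu⟩ =>
      ⟨P.equivFin ⟨A, hA⟩, by simpa [C] using hu⟩⟩
  have hC_sep (i j) (hij : i ≠ j) := hsep _ (hCP i) _ (hCP j) (hC_inj.ne hij)
  have hC_card (i) : (C i).card = 2 ∨ (C i).card = 3 := card_of_mem_ref hd (hP _ (hCP i))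
  have hC_nonempty (i) : (C i).Nonempty := Finset.card_pos.1 (by have := hC_card i; omega)
  have hothers (i) : (others d C i).Nonempty := by
    obtain ⟨u, hu, hui⟩ := Finset.exists_mem_notMem_of_card_lt_card
      (show (C i).card < (P.biUnion id).card by have := hC_card i; omega)
    obtain ⟨j, -, huj⟩ := Finset.mem_biUnion.1 (hC_union ▸ hu)
    exact ⟨u, mem_others.2 ⟨j, fun h => hui (h ▸ huj), huj⟩⟩
  have hP_pos : 0 < P.card := Finset.card_pos.2 <| Finset.nonempty_iff_ne_empty.2 <| by
    rintro rfl
    simp at hcard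
  refine ⟨rfl, ⟨P.card, C⟩, ⟨hC_nonempty, fun i j hij => Finset.disjoint_left.2 fun u hi hj => ?_,
    hC_union⟩, isDOT_of_mem_ref hd hP_pos (fun i => hP _ (hCP i)) (fun i => ?_) ha⟩
  · have := hC_sep i j hij u hi u hj
    rw [dist_self] at this
    exact this.not_ge a.cast_nonneg
  · refine le_setDist (hC_nonempty i) (hothers i) fun x hx y hy => ?_
    obtain ⟨j, hji, hyj⟩ := mem_others.1 hy
    exact (hC_sep i j hji.symm x hx y hyj).le

lemma IsHATLaw.le_of_inSteps {U : Conf d} {μ : Measure (ℕ → Conf d)} (hμ : IsHATLaw d U μ)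
    {c : ℝ} (hc : 0 ≤ c) (h : InSteps (HATStep c) k U V) :
    ENNReal.ofReal (c ^ k) ≤ μ {ω | ω k = V} := by
  obtain ⟨u, hu0, huk, hu⟩ := h.exists_seq
  calc ENNReal.ofReal (c ^ k) = ∏ _s ∈ Finset.range k, ENNReal.ofReal c := by
        rw [ENNReal.ofReal_pow hc, Finset.prod_const, Finset.card_range]
    _ ≤ ∏ s ∈ Finset.range k, ENNReal.ofReal (hatProb d (u s) (u (s + 1))) :=
        Finset.prod_le_prod' fun s hs => ENNReal.ofReal_le_ofReal (hu s (Finset.mem_range.1 hs)).2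
    _ = μ {ω | ∀ s ≤ k, ω s = u s} := by rw [hμ.2 k u, if_pos hu0, one_mul]
    _ ≤ μ {ω | ω k = V} := measure_mono fun ω hω => (hω k le_rfl).trans huk

end DOT

end

/-- **Formation of DOT configurations.** For `d ≥ 5`, `n ≥ 4` and all sufficiently large
`a ∈ ℤ_{≥2}`, there are `f ∈ ℤ_{≥0}` and `g > 0` such that, from any `n`-element
configuration `U ⊂ ℤ^d`, `P_U(U_f ∈ 𝒰_{d,n}(a,1)) ≥ g`. -/
theorem form_dot (d n : ℕ) (hd : 5 ≤ d) (hn : 4 ≤ n) :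
    ∃ a0 : ℕ, ∀ a : ℕ, 2 ≤ a → a0 ≤ a →
      ∃ (f : ℕ) (g : ℝ), 0 < g ∧
        ∀ U : Conf d, U.card = n →
          ∀ μ : Measure (ℕ → Conf d), IsHATLaw d U μ →
            ENNReal.ofReal g ≤ μ {ω | InU d n (a : ℝ) 1 (ω f)} := by
  refine ⟨8 * n + 2, fun a _ ha => ?_⟩
  obtain ⟨K, c, hc, hreach⟩ := exists_inSteps_hatStep_isDOTUnion hd (n := n) (by omega) a
  let c' : ℝ := min c (moveBound d n (moveLength d n 2))
  have hc' : 0 < c' := lt_min hc (moveBound_pos (by omega) (by omega) _)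
  refine ⟨K, c' ^ K, pow_pos hc' K, fun U hU μ hμ => ?_⟩
  obtain ⟨k, hk, V, hV, hsteps⟩ := hreach U hU
  have hVn : V.card = n := hsteps.card_eq.trans hU
  have hidle : HATStep c' V V := (hVn ▸ hV.hatStep_self hd (Finset.card_pos.1 (by omega))
    (by omega)).mono (min_le_right _ _)
  have hexact : InSteps (HATStep c') K U V := Nat.add_sub_cancel' hk ▸
    (hsteps.mono fun _ _ => HATStep.mono (min_le_left _ _)).trans (.iterate_of_refl hidle (K - k))
  have hInU : InU d n a 1 V := hVn ▸ hV.inU (by omega) (by omega) (by omega)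
  exact (hμ.le_of_inSteps hc'.le hexact).trans <| measure_mono fun ω (hω : ω K = V) =>
    show InU d n a 1 (ω K) from hω ▸ hInU

end HATFormal
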